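/- arXiv:1312.5196 — 6 statements merged into one kernel-verified Lean document; each statement's English description precedes it below -/
import Mathlib

section
/- Let p be an odd prime and let G be a nontrivial finite p-group of derived length d. Then exp M(G) divides (exp G)^d. -/
/-!
Write `e = exp G`, which is odd. A cocycle `α` gives a central extension `Γ` of `G` by `ℂˣ`, with
a section `u` satisfying `u x * u y = α x y • u (x * y)`. The key fact is that
`γ ↦ γ ^ (e ^ d)` is a homomorphism from `Γ` to its centre. Granting it, `ζ x = (u x) ^ (e ^ d)`
satisfies `ζ x * ζ y = α x y ^ (e ^ d) * ζ (x * y)`, so `α ^ (e ^ d)` is a coboundary.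

The key fact is proved by climbing the preimages in `Γ` of the derived series of `G`, starting from
the preimage `ℂˣ` of the trivial group, where the first power is a homomorphism. Suppose that the
`q`-th power is a homomorphism with central values on a normal subgroup `P`, and that `H` has its
commutators in `P`. Then `K = {t ∈ P | t ^ q = 1}` is a normal subgroup, and `P / K` is central in
`Γ / K` because conjugate elements of `P` have the same `q`-th power. Hence commutators of `H` are
central modulo `K`. Since `e`-th powers are central in `Γ` and `e` is odd, the class-two power
formula gives `(x * y) ^ e = k * x ^ e * y ^ e` with `k ∈ K`, and raising this to the `q`-th power
kills `k` (`pow_mul_step`).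
-/

def IsCocycle {G : Type*} [Group G] (α : G → G → ℂˣ) : Prop :=
  ∀ x y z : G, α x y * α (x * y) z = α x (y * z) * α y z

/-- The group of 2-cocycles on `G` with values in `ℂˣ` (trivial action). -/
def Z2 (G : Type*) [Group G] : Subgroup (G → G → ℂˣ) where
  carrier := {α | IsCocycle α}
  one_mem' := by intro x y z; simp
  mul_mem' := by
    intro a b ha hb x y z
    simp only [Pi.mul_apply]
    rw [mul_mul_mul_comm, ha x y z, hb x y z, mul_mul_mul_comm]
  inv_mem' := by
    intro a ha x y z
    simp only [Pi.inv_apply]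
    rw [← mul_inv, ha x y z, mul_inv]

/-- The group of 2-coboundaries on `G` with values in `ℂˣ`. -/
def B2 (G : Type*) [Group G] : Subgroup (G → G → ℂˣ) where
  carrier := {α | ∃ ζ : G → ℂˣ, ∀ x y : G, α x y = ζ x * ζ y * (ζ (x * y))⁻¹}
  one_mem' := ⟨1, by simp⟩
  mul_mem' := by
    rintro a b ⟨ζ, hζ⟩ ⟨ξ, hξ⟩
    refine ⟨ζ * ξ, fun x y => ?_⟩
    simp only [Pi.mul_apply, hζ x y, hξ x y, mul_inv]
    simp only [mul_comm, mul_left_comm, mul_assoc]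
  inv_mem' := by
    rintro a ⟨ζ, hζ⟩
    refine ⟨ζ⁻¹, fun x y => ?_⟩
    simp only [Pi.inv_apply, hζ x y, mul_inv, inv_inv]

/-- The Schur multiplier `M(G) = Z²(G)/B²(G)`. -/
abbrev SchurM (G : Type*) [Group G] := ↥(Z2 G) ⧸ (B2 G).subgroupOf (Z2 G)

/-- The power formula in nilpotency class two: `c` plays the role of the commutator of `b`
and `a`. -/
theorem mul_pow_of_class_two {Q : Type*} [Group Q] {a b c : Q} (h : b * a = c * a * b)
    (hca : Commute c a) (hcb : Commute c b) (n : ℕ) :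
    (b ^ n * a = c ^ n * a * b ^ n) ∧ (a * b) ^ n = c ^ (n.choose 2) * a ^ n * b ^ n := by
  have key : ∀ n : ℕ, b ^ n * a = c ^ n * a * b ^ n := by
    intro n
    induction n with
    | zero => simp
    | succ n ih =>
      calc b ^ (n + 1) * a = b * (b ^ n * a) := by rw [pow_succ']; group
        _ = (b * c ^ n) * a * b ^ n := by rw [ih]; group
        _ = c ^ n * (b * a) * b ^ n := by rw [← (hcb.pow_left n).eq]; group
        _ = c ^ (n + 1) * a * b ^ (n + 1) := by rw [h, pow_succ, pow_succ']; simp only [mul_assoc]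
  refine ⟨key n, ?_⟩
  induction n with
  | zero => simp
  | succ n ih =>
    calc (a * b) ^ (n + 1) = c ^ (n.choose 2) * a ^ n * (b ^ n * a) * b := by
          rw [pow_succ, ih]; simp only [mul_assoc]
      _ = c ^ (n.choose 2) * (a ^ n * c ^ n) * a * b ^ n * b := by
          rw [key]; simp only [mul_assoc]
      _ = (c ^ (n.choose 2) * c ^ n) * (a ^ n * a) * (b ^ n * b) := by
          rw [← (hca.pow_pow n n).eq]; simp only [mul_assoc]
      _ = _ := by
          rw [← pow_add, ← pow_succ, ← pow_succ, Nat.choose_succ_succ' n 1, Nat.choose_one_right,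
            add_comm]

/-- For odd `e` with `b ^ e` commuting with `a`, the correction term of the class-two power formula is
trivial. -/
theorem mul_pow_odd_of_class_two {Q : Type*} [Group Q] {a b c : Q} (h : b * a = c * a * b)
    (hca : Commute c a) (hcb : Commute c b) {e : ℕ} (he : Odd e) (hb : Commute (b ^ e) a) :
    (a * b) ^ e = a ^ e * b ^ e := by
  obtain ⟨h1, h2⟩ := mul_pow_of_class_two h hca hcb e
  have hc : c ^ e = 1 := by
    rw [hb.eq, mul_assoc] at h1
    exact (right_eq_mul.mp h1)
  have hdvd : e ∣ e.choose 2 := by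
    obtain ⟨k, rfl⟩ := he
    refine ⟨k, ?_⟩
    rw [Nat.choose_two_right, Nat.add_sub_cancel]
    rw [show (2 * k + 1) * (2 * k) = (2 * k + 1) * k * 2 by ring]
    exact Nat.mul_div_cancel _ (by norm_num)
  obtain ⟨m, hm⟩ := hdvd
  rw [h2, hm, pow_mul, hc, one_pow, one_mul]

open scoped commutatorElement in
/-- If the `q`-th power is a homomorphism with central values on the normal subgroup `P`, and `H`
is abelian modulo `P`, then the `e * q`-th power is multiplicative on `H`. -/
theorem pow_mul_step {Γ : Type*} [Group Γ] (P H : Subgroup Γ) [P.Normal]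
    (hHP : ∀ x ∈ H, ∀ y ∈ H, ⁅x, y⁆ ∈ P) {e q : ℕ} (hodd : Odd e)
    (he : ∀ x : Γ, x ^ e ∈ Subgroup.center Γ) (hq : ∀ t ∈ P, t ^ q ∈ Subgroup.center Γ)
    (hom : ∀ s ∈ P, ∀ t ∈ P, (s * t) ^ q = s ^ q * t ^ q) :
    ∀ x ∈ H, ∀ y ∈ H, (x * y) ^ (e * q) = x ^ (e * q) * y ^ (e * q) := by
  intro x hx y hy
  let K : Subgroup Γ :=
    { carrier := {t | t ∈ P ∧ t ^ q = 1}
      one_mem' := ⟨P.one_mem, one_pow q⟩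
      mul_mem' := fun {s t} hs ht => ⟨P.mul_mem hs.1 ht.1, by
        rw [hom s hs.1 t ht.1, hs.2, ht.2, one_mul]⟩
      inv_mem' := fun {s} hs => ⟨P.inv_mem hs.1, by rw [inv_pow, hs.2, inv_one]⟩ }
  have hKn : K.Normal := ⟨fun t ht g => ⟨Subgroup.Normal.conj_mem ‹_› t ht.1 g, by
    rw [conj_pow, ht.2, mul_one, mul_inv_cancel]⟩⟩
  have hcent : ∀ t ∈ P, ∀ g : Γ, Commute (t : Γ ⧸ K) (g : Γ ⧸ K) := by
    intro t ht g
    have hconj : g⁻¹ * t⁻¹ * g ∈ P := by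
      simpa using Subgroup.Normal.conj_mem ‹_› t⁻¹ (P.inv_mem ht) g⁻¹
    have hpow : (g⁻¹ * t⁻¹ * g) ^ q = (t ^ q)⁻¹ := by
      have h1 : (g⁻¹ * t⁻¹ * g) ^ q = g⁻¹ * (t⁻¹) ^ q * g := by
        simpa using conj_pow (a := g⁻¹) (b := t⁻¹) (i := q)
      have h2 := Subgroup.mem_center_iff.mp (Subgroup.inv_mem _ (hq t ht)) g
      rw [h1, inv_pow, mul_assoc, ← h2, inv_mul_cancel_left]
    refine (QuotientGroup.eq.mpr (?_ : (g * t)⁻¹ * (t * g) ∈ K)).symm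
    have : (g * t)⁻¹ * (t * g) = t⁻¹ * (g⁻¹ * t * g) := by group
    rw [this]
    have hconj' : g⁻¹ * t * g ∈ P := by
      simpa using Subgroup.Normal.conj_mem ‹_› t ht g⁻¹
    refine ⟨P.mul_mem (P.inv_mem ht) hconj', ?_⟩
    have hinv : g⁻¹ * t * g = (g⁻¹ * t⁻¹ * g)⁻¹ := by group
    rw [hom _ (P.inv_mem ht) _ hconj', hinv, inv_pow, inv_pow, hpow, inv_inv, inv_mul_cancel]
  have hc : ⁅y, x⁆ ∈ P := hHP y hy x hx
  have hquot : ((x : Γ ⧸ K) * y) ^ e = (x : Γ ⧸ K) ^ e * (y : Γ ⧸ K) ^ e := by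
    refine mul_pow_odd_of_class_two (c := ((⁅y, x⁆ : Γ) : Γ ⧸ K)) ?_ (hcent _ hc x) (hcent _ hc y)
      hodd ?_
    · rw [← QuotientGroup.mk_mul, ← QuotientGroup.mk_mul, ← QuotientGroup.mk_mul]
      congr 1
      rw [commutatorElement_def]; group
    · have := Subgroup.mem_center_iff.mp (he y) x
      rw [← QuotientGroup.mk_pow]
      change (_ : Γ ⧸ K) * _ = _ * _
      rw [← QuotientGroup.mk_mul, ← QuotientGroup.mk_mul, this]
  have hk : (x ^ e * y ^ e)⁻¹ * (x * y) ^ e ∈ K := by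
    refine QuotientGroup.eq.mp ?_
    simpa only [QuotientGroup.mk_mul, QuotientGroup.mk_pow] using hquot.symm
  obtain ⟨k, hkdef⟩ : ∃ k, k = (x ^ e * y ^ e)⁻¹ * (x * y) ^ e := ⟨_, rfl⟩
  rw [← hkdef] at hk
  have hxy : (x * y) ^ e = x ^ e * y ^ e * k := by rw [hkdef, mul_inv_cancel_left]
  have cx : ∀ g, Commute (x ^ e) g := fun g => (Subgroup.mem_center_iff.mp (he x) g).symm
  have cy : ∀ g, Commute (y ^ e) g := fun g => (Subgroup.mem_center_iff.mp (he y) g).symm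
  rw [pow_mul, hxy, ((cx k).mul_left (cy k)).mul_pow, (cx _).mul_pow, hk.2, mul_one, pow_mul,
    pow_mul]

/-- If `Γ` is a central extension of a subgroup of `G`, where `G` has derived length at most `d` and
exponent dividing the odd number `e`, then the `e ^ d`-th power is multiplicative on `Γ`. -/
theorem pow_exponent_pow_mul {Γ G : Type*} [Group Γ] [Group G] (f : Γ →* G)
    (hf : f.ker ≤ Subgroup.center Γ) {e : ℕ} (hodd : Odd e) (he : ∀ g : G, g ^ e = 1)
    (d : ℕ) (hd : derivedSeries G d = ⊥) (x y : Γ) :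
    (x * y) ^ (e ^ d) = x ^ (e ^ d) * y ^ (e ^ d) := by
  have hec : ∀ x : Γ, x ^ e ∈ Subgroup.center Γ := fun x =>
    hf (by rw [MonoidHom.mem_ker, map_pow, he])
  have main : ∀ j ≤ d,
      (∀ t ∈ (derivedSeries G (d - j)).comap f, t ^ (e ^ j) ∈ Subgroup.center Γ) ∧
      ∀ s ∈ (derivedSeries G (d - j)).comap f, ∀ t ∈ (derivedSeries G (d - j)).comap f,
        (s * t) ^ (e ^ j) = s ^ (e ^ j) * t ^ (e ^ j) := by
    intro j
    induction j with
    | zero =>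
      intro _
      refine ⟨fun t ht => ?_, fun s _ t _ => by simp⟩
      rw [pow_zero, pow_one]
      refine hf ?_
      simpa [hd] using ht
    | succ j ih =>
      intro hj
      obtain ⟨h1, h2⟩ := ih (by omega)
      have hdj : d - j = (d - (j + 1)) + 1 := by omega
      refine ⟨fun t _ => by rw [pow_succ', pow_mul]; exact Subgroup.pow_mem _ (hec t) _, ?_⟩
      have hnormal := derivedSeries_normal G (d - j)
      rw [pow_succ']
      refine pow_mul_step ((derivedSeries G (d - j)).comap f) _ ?_ hodd hec h1 h2
      intro x hx y hy
      rw [Subgroup.mem_comap, map_commutatorElement, hdj, derivedSeries_succ]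
      exact Subgroup.commutator_mem_commutator hx hy
  exact (main d le_rfl).2 x (by simp) y (by simp)

/-- The underlying set `ℂˣ × G` of the central extension of `G` defined by the cocycle `α`. -/
@[ext]
structure CocycleExt {G : Type*} [Group G] (α : G → G → ℂˣ) where
  /-- The scalar component. -/
  scalar : ℂˣ
  /-- The image in `G`. -/
  base : G

namespace CocycleExt

variable {G : Type*} [Group G] {α : G → G → ℂˣ}

theorem cocycle_one_left (h : IsCocycle α) (x : G) : α 1 x = α 1 1 := by
  have := h 1 1 x
  simpa using this.symm

theorem cocycle_one_right (h : IsCocycle α) (x : G) : α x 1 = α 1 1 := by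
  have := h x 1 1
  simpa using this

/-- The extension group: `(a, x) * (b, y) = (a * b * α x y, x * y)`. As `α` need not be normalized,
the identity is `((α 1 1)⁻¹, 1)`. -/
abbrev group (h : IsCocycle α) : Group (CocycleExt α) :=
  letI : Mul (CocycleExt α) := ⟨fun s t => ⟨s.scalar * t.scalar * α s.base t.base, s.base * t.base⟩⟩
  letI : One (CocycleExt α) := ⟨⟨(α 1 1)⁻¹, 1⟩⟩
  letI : Inv (CocycleExt α) :=
    ⟨fun s => ⟨(α 1 1)⁻¹ * (α s.base⁻¹ s.base)⁻¹ * s.scalar⁻¹, s.base⁻¹⟩⟩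
  Group.ofLeftAxioms
    (fun s t u => by
      refine CocycleExt.ext ?_ (mul_assoc _ _ _)
      change s.scalar * t.scalar * α s.base t.base * u.scalar * α (s.base * t.base) u.base =
        s.scalar * (t.scalar * u.scalar * α t.base u.base) * α s.base (t.base * u.base)
      calc _ = s.scalar * t.scalar * u.scalar * (α s.base t.base * α (s.base * t.base) u.base) := by
            simp only [mul_comm, mul_left_comm]
        _ = _ := by
            rw [h]; simp only [mul_comm, mul_left_comm])
    (fun s => by
      refine CocycleExt.ext ?_ (one_mul _)
      change (α 1 1)⁻¹ * s.scalar * α 1 s.base = s.scalar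
      rw [cocycle_one_left h s.base, mul_comm, mul_inv_cancel_left])
    (fun s => by
      refine CocycleExt.ext ?_ (inv_mul_cancel _)
      change (α 1 1)⁻¹ * (α s.base⁻¹ s.base)⁻¹ * s.scalar⁻¹ * s.scalar * α s.base⁻¹ s.base =
        (α 1 1)⁻¹
      rw [inv_mul_cancel_right, inv_mul_cancel_right])

end CocycleExt

/-- If `α` is a cocycle on a group of derived length at most `d` and exponent dividing the odd
number `e`, then `α ^ (e ^ d)` is a coboundary. -/
theorem cocycle_pow_mem_B2 {G : Type*} [Group G] {α : G → G → ℂˣ} (h : IsCocycle α) {e : ℕ}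
    (hodd : Odd e) (he : ∀ g : G, g ^ e = 1) (d : ℕ) (hd : derivedSeries G d = ⊥) :
    α ^ (e ^ d) ∈ B2 G := by
  let _ := CocycleExt.group h
  let f : CocycleExt α →* G :=
    { toFun := CocycleExt.base, map_one' := rfl, map_mul' := fun _ _ => rfl }
  have hmul : ∀ s t : CocycleExt α,
      (s * t).scalar = s.scalar * t.scalar * α s.base t.base := fun _ _ => rfl
  have hbase : ∀ s t : CocycleExt α, (s * t).base = s.base * t.base := fun _ _ => rfl
  have hf : f.ker ≤ Subgroup.center (CocycleExt α) := by
    intro z hz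
    have hz1 : z.base = 1 := hz
    refine Subgroup.mem_center_iff.mpr fun g => CocycleExt.ext ?_ ?_
    · rw [hmul, hmul, hz1, CocycleExt.cocycle_one_left h, CocycleExt.cocycle_one_right h,
        mul_comm g.scalar]
    · rw [hbase, hbase, hz1, mul_one, one_mul]
  have hpow := pow_exponent_pow_mul f hf hodd he d hd
  -- The embedding of `ℂˣ` as the kernel of `f`; the factor `(α 1 1)⁻¹` makes it multiplicative.
  let ι : ℂˣ →* CocycleExt α :=
    { toFun := fun a => ⟨a * (α 1 1)⁻¹, 1⟩
      map_one' := CocycleExt.ext (one_mul _) rfl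
      map_mul' := fun a b => by
        refine CocycleExt.ext ?_ (one_mul 1).symm
        change a * b * (α 1 1)⁻¹ = a * (α 1 1)⁻¹ * (b * (α 1 1)⁻¹) * α 1 1
        rw [mul_assoc (a * _), inv_mul_cancel_right, mul_right_comm] }
  have hι : ∀ a s, (ι a * s).scalar = a * s.scalar := by
    intro a s
    change a * (α 1 1)⁻¹ * s.scalar * α 1 s.base = a * s.scalar
    rw [CocycleExt.cocycle_one_left h s.base, mul_right_comm a, inv_mul_cancel_right]
  let u : G → CocycleExt α := fun x => ⟨1, x⟩
  have hu : ∀ x y, u x * u y = ι (α x y) * u (x * y) := by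
    intro x y
    refine CocycleExt.ext ?_ (one_mul (x * y)).symm
    rw [hι, hmul]
    change 1 * 1 * α x y = α x y * 1
    rw [one_mul, one_mul, mul_one]
  have hN : ∀ g : G, g ^ (e ^ d) = 1 := by
    intro g
    cases d with
    | zero =>
      have hg : g ∈ derivedSeries G 0 := by simp
      rw [hd, Subgroup.mem_bot] at hg
      rw [hg, one_pow]
    | succ d => rw [pow_succ', pow_mul, he, one_pow]
  have hub : ∀ x, (u x ^ (e ^ d)).base = 1 := fun x => (map_pow f (u x) (e ^ d)).trans (hN x)
  -- The preimage of `(u x) ^ (e ^ d)` under `ι`.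
  refine ⟨fun x => (u x ^ (e ^ d)).scalar * α 1 1, fun x y => ?_⟩
  rw [eq_mul_inv_iff_mul_eq, Pi.pow_apply, Pi.pow_apply]
  have hxy : u x ^ (e ^ d) * u y ^ (e ^ d) = ι (α x y ^ (e ^ d)) * u (x * y) ^ (e ^ d) := by
    rw [← hpow, hu, hpow, map_pow]
  have hs := congrArg CocycleExt.scalar hxy
  rw [hι, hmul, hub, hub] at hs
  change _ = (u x ^ (e ^ d)).scalar * α 1 1 * ((u y ^ (e ^ d)).scalar * α 1 1)
  rw [← mul_assoc, ← hs, ← mul_assoc, mul_right_comm _ (α 1 1) (u y ^ (e ^ d)).scalar]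

/-- Let `p` be an odd prime and `G` a nontrivial finite `p`-group of
derived length `d`. Then `exp M(G)` divides `(exp G)^d`. -/
theorem exponent_schurMultiplier_dvd_pow_derivedLength_odd
    (p : ℕ) (hp : p.Prime) (hodd : Odd p)
    (G : Type*) [Group G] [Finite G] [Nontrivial G] (hG : IsPGroup p G)
    (d : ℕ) (hd : derivedSeries G d = ⊥) (hmin : ∀ e < d, derivedSeries G e ≠ ⊥) :
    Monoid.exponent (SchurM G) ∣ (Monoid.exponent G) ^ d := by
  have := Fact.mk hp
  obtain ⟨n, hn⟩ := IsPGroup.iff_card.mp hG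
  have hodd' : Odd (Monoid.exponent G) := by
    refine Odd.of_dvd_nat (hodd.pow (n := n)) ?_
    rw [← hn]
    exact Group.exponent_dvd_nat_card
  refine Monoid.exponent_dvd_of_forall_pow_eq_one fun a => ?_
  obtain ⟨⟨α, hα⟩, rfl⟩ := QuotientGroup.mk_surjective a
  rw [← QuotientGroup.mk_pow, QuotientGroup.eq_one_iff, Subgroup.mem_subgroupOf]
  exact cocycle_pow_mem_B2 hα hodd' Monoid.pow_exponent_eq_one d hd
end

section
/- Let p be an odd prime and let G be a finite p-group admitting a subnormal series G = G₀ > G₁ > ⋯ > G_{r-1} > G_r = 1 with G_i normal in G_{i-1}, such that every factor Q_i = G_{i-1}/G_i is a powerful p-group. Then exp M(G) divides (∏_{j=2}^{r} exp Q_j) · exp M(Q₁). -/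
/-- The agemo subgroup `℧(G) = ⟨g^p : g ∈ G⟩`. -/
def agemo (p : ℕ) (G : Type*) [Group G] : Subgroup G :=
  Subgroup.closure {x : G | ∃ g : G, g ^ p = x}

/-- A `p`-group is powerful (for `p` odd) if its derived subgroup is contained in `℧(G)`. -/
def IsPowerful (p : ℕ) (G : Type*) [Group G] : Prop :=
  commutator G ≤ agemo p G

open scoped commutatorElement

/-! ### Powers of a product -/

/-- Class-two power formula: if `ba = abd` with `d` commuting with `a` and `b`, then
`(ab)ⁿ = aⁿ bⁿ d^(n choose 2)`. -/
theorem mul_pow_of_commutes {G : Type*} [Group G] {a b d : G} (h : b * a = a * b * d)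
    (ha : Commute d a) (hb : Commute d b) (n : ℕ) :
    (a * b) ^ n = a ^ n * b ^ n * d ^ n.choose 2 := by
  have key : ∀ n : ℕ, b ^ n * a = a * b ^ n * d ^ n := by
    intro n
    induction n with
    | zero => simp
    | succ n ih =>
      have e : Commute (d ^ n) b := hb.pow_left n
      calc b ^ (n + 1) * a = b ^ n * (b * a) := by rw [pow_succ, mul_assoc]
        _ = b ^ n * a * b * d := by rw [h]; simp only [mul_assoc]
        _ = a * b ^ n * (d ^ n * b) * d := by rw [ih]; simp only [mul_assoc]
        _ = a * b ^ (n + 1) * d ^ (n + 1) := by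
          rw [e.eq, pow_succ, pow_succ]; simp only [mul_assoc]
  induction n with
  | zero => simp
  | succ n ih =>
    have e1 : Commute (d ^ n.choose 2) (a * b) := (ha.mul_right hb).pow_left _
    have e2 : Commute (d ^ n) b := hb.pow_left n
    have hc : (n + 1).choose 2 = n + n.choose 2 := by
      rw [Nat.choose_succ_succ' n 1, Nat.choose_one_right]
    calc (a * b) ^ (n + 1) = a ^ n * b ^ n * (d ^ n.choose 2 * (a * b)) := by
          rw [pow_succ, ih]; simp only [mul_assoc]
      _ = a ^ n * (b ^ n * a) * b * d ^ n.choose 2 := by rw [e1.eq]; simp only [mul_assoc]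
      _ = a ^ n * a * b ^ n * (d ^ n * b) * d ^ n.choose 2 := by
          rw [key]; simp only [mul_assoc]
      _ = a ^ (n + 1) * b ^ (n + 1) * d ^ (n + 1).choose 2 := by
          rw [e2.eq, hc, pow_add d, pow_succ a, pow_succ b]; simp only [mul_assoc]

/-- For odd `p` the exponent `p choose 2` is divisible by `p`, so a correction term of order `p`
disappears. -/
theorem mul_pow_prime_of_commutes {p : ℕ} (hp : p.Prime) (hodd : Odd p)
    {G : Type*} [Group G] {a b d : G} (h : b * a = a * b * d)
    (ha : Commute d a) (hb : Commute d b) (hd : d ^ p = 1) :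
    (a * b) ^ p = a ^ p * b ^ p := by
  have h2 : 2 < p := by
    rcases hp.two_le.lt_or_eq with h | h
    · exact h
    · subst h; exact absurd hodd (by decide)
  obtain ⟨c, hc⟩ := hp.dvd_choose_self two_ne_zero h2
  rw [mul_pow_of_commutes h ha hb, hc, pow_mul, hd, one_pow, mul_one]

/-! ### The agemo subgroup and powerful groups -/

theorem map_agemo_le (p : ℕ) {G H : Type*} [Group G] [Group H] (f : G →* H) :
    (agemo p G).map f ≤ agemo p H := by
  rw [Subgroup.map_le_iff_le_comap, agemo, Subgroup.closure_le]
  rintro _ ⟨g, rfl⟩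
  exact Subgroup.subset_closure ⟨f g, (map_pow f g p).symm⟩

theorem map_agemo (p : ℕ) {G H : Type*} [Group G] [Group H] (f : G →* H)
    (hf : Function.Surjective f) : (agemo p G).map f = agemo p H := by
  refine le_antisymm (map_agemo_le p f) ?_
  rw [agemo, Subgroup.closure_le]
  rintro _ ⟨h, rfl⟩
  obtain ⟨g, rfl⟩ := hf h
  exact ⟨g ^ p, Subgroup.subset_closure ⟨g, rfl⟩, map_pow f g p⟩

theorem pow_mem_agemo (p : ℕ) {G : Type*} [Group G] (g : G) : g ^ p ∈ agemo p G :=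
  Subgroup.subset_closure ⟨g, rfl⟩

instance agemo_characteristic (p : ℕ) (G : Type*) [Group G] : (agemo p G).Characteristic :=
  Subgroup.characteristic_iff_map_le.2 fun f => map_agemo_le p f.toMonoidHom

theorem IsPowerful.commutator_mem {p : ℕ} {G : Type*} [Group G] (h : IsPowerful p G) (x y : G) :
    ⁅x, y⁆ ∈ agemo p G :=
  h (Subgroup.commutator_mem_commutator (Subgroup.mem_top x) (Subgroup.mem_top y))

theorem isPowerful_of_commutator_mem {p : ℕ} {G : Type*} [Group G]
    (h : ∀ x y : G, ⁅x, y⁆ ∈ agemo p G) : IsPowerful p G :=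
  Subgroup.commutator_le.2 fun x _ y _ => h x y

theorem IsPowerful.of_surjective {p : ℕ} {G H : Type*} [Group G] [Group H]
    (h : IsPowerful p G) (f : G →* H) (hf : Function.Surjective f) : IsPowerful p H := by
  refine isPowerful_of_commutator_mem fun x y => ?_
  obtain ⟨x, rfl⟩ := hf x
  obtain ⟨y, rfl⟩ := hf y
  rw [← map_commutatorElement]
  exact map_agemo_le p f ⟨_, h.commutator_mem x y, rfl⟩

/-- If `℧(G)` has exponent dividing `p` in a nilpotent powerful group, it is central. Modulo the
centre this holds by induction, so `[℧(G), G]` is central; then for `c = [g, x] ∈ ℧(G)` the class-two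
formula gives `g xᵖ g⁻¹ = (c x)ᵖ = cᵖ xᵖ = xᵖ`. -/
theorem agemo_le_center {p : ℕ} (hp : p.Prime) (hodd : Odd p) (G : Type*) [Group G]
    [Group.IsNilpotent G] (hG : IsPowerful p G) (h1 : ∀ n ∈ agemo p G, n ^ p = 1) :
    agemo p G ≤ Subgroup.center G := by
  revert hG h1
  refine Group.nilpotent_center_quotient_ind
    (P := fun G _ _ => IsPowerful p G → (∀ n ∈ agemo p G, n ^ p = 1) →
      agemo p G ≤ Subgroup.center G) G ?_ ?_
  · intro G _ _ _ _ n _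
    rw [Subgroup.mem_center_iff]
    intro g
    exact Subsingleton.elim _ _
  · intro G _ _ ih hG h1
    have hs := QuotientGroup.mk'_surjective (Subgroup.center G)
    have ih' := ih (hG.of_surjective _ hs) (by
      rw [← map_agemo p _ hs]
      rintro _ ⟨n, hn, rfl⟩
      rw [← map_pow, h1 n hn, map_one])
    have hcen : ∀ n ∈ agemo p G, ∀ g : G, ⁅g, n⁆ ∈ Subgroup.center G := by
      intro n hn g
      have hn' := ih' (map_agemo_le p (QuotientGroup.mk' (Subgroup.center G)) ⟨n, hn, rfl⟩)
      rw [Subgroup.mem_center_iff] at hn'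
      have h2 := hn' (QuotientGroup.mk' (Subgroup.center G) g)
      rw [← QuotientGroup.ker_mk' (Subgroup.center G), MonoidHom.mem_ker, map_commutatorElement,
        commutatorElement_eq_one_iff_mul_comm]
      exact h2
    rw [agemo, Subgroup.closure_le]
    rintro _ ⟨x, rfl⟩
    rw [SetLike.mem_coe, Subgroup.mem_center_iff]
    intro g
    have hc : ⁅g, x⁆ ∈ agemo p G := hG.commutator_mem g x
    set c := ⁅g, x⁆ with hcdef
    have hd : ⁅x⁻¹, c⁻¹⁆ ∈ Subgroup.center G := hcen _ (inv_mem hc) _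
    have hdc : ∀ z, Commute ⁅x⁻¹, c⁻¹⁆ z := fun z => (Subgroup.mem_center_iff.1 hd z).symm
    have key := mul_pow_prime_of_commutes hp hodd (a := c) (b := x) (d := ⁅x⁻¹, c⁻¹⁆)
      (by rw [commutatorElement_def]; group) (hdc c) (hdc x) (h1 _ (hG.commutator_mem _ _))
    have hconj : c * x = g * x * g⁻¹ := by rw [hcdef, commutatorElement_def]; group
    rw [hconj, conj_pow, h1 c hc, one_mul] at key
    rw [← mul_inv_eq_iff_eq_mul, key]

/-- The agemo subgroup of a nilpotent powerful group is powerful: modulo the subgroup `L` generated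
by the `p`-th powers of elements of `℧(G)`, `agemo_le_center` makes `℧(G)` central. -/
theorem IsPowerful.agemo {p : ℕ} (hp : p.Prime) (hodd : Odd p) (G : Type*) [Group G]
    [Group.IsNilpotent G] (hG : IsPowerful p G) : IsPowerful p (agemo p G) := by
  set N := _root_.agemo p G with hN
  set L : Subgroup G := (_root_.agemo p N).map N.subtype with hL
  have : L.Normal := by rw [hL]; infer_instance
  have hs := QuotientGroup.mk'_surjective L
  have hc := agemo_le_center hp hodd (G ⧸ L) (hG.of_surjective _ hs) (by
    rw [← map_agemo p _ hs]
    rintro _ ⟨n, hn, rfl⟩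
    rw [← map_pow, ← MonoidHom.mem_ker, QuotientGroup.ker_mk']
    exact ⟨(⟨n, hn⟩ : N) ^ p, pow_mem_agemo p _, rfl⟩)
  refine isPowerful_of_commutator_mem fun x y => ?_
  have hx := hc (map_agemo_le p (QuotientGroup.mk' L) ⟨x.1, x.2, rfl⟩)
  have h2 := Subgroup.mem_center_iff.1 hx (QuotientGroup.mk' L y.1)
  have h3 : ⁅x.1, y.1⁆ ∈ L := by
    rw [← QuotientGroup.ker_mk' L, MonoidHom.mem_ker, map_commutatorElement,
        commutatorElement_eq_one_iff_mul_comm]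
    exact h2.symm
  obtain ⟨z, hz, hz'⟩ := h3
  have : z = ⁅x, y⁆ := Subtype.ext hz'
  rwa [← this]

/-! ### Central extensions on which a power map is multiplicative -/

/-- `PowMulOnCentralExt Q q` says that `x ↦ x ^ q` is multiplicative on every central extension
of `Q` (presented as a surjection onto `Q` with central kernel). -/
def PowMulOnCentralExt.{u, v} (Q : Type v) [Group Q] (q : ℕ) : Prop :=
  ∀ (H : Type u) [Group H] (π : H →* Q), Function.Surjective π → π.ker ≤ Subgroup.center H →
    ∀ x y : H, (x * y) ^ q = x ^ q * y ^ q

/-- If `z ↦ zⁿ` is multiplicative on the kernel `M` of `π : H → Q` with values central in `H`,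
then `M` becomes central modulo `K = {z ∈ M | zⁿ = 1}`, so `H / K` is a central extension of `Q`
and the `q`-th power map is multiplicative modulo `K`; taking `n`-th powers kills `K`. -/
theorem PowMulOnCentralExt.mul_pow_mul.{u, v} {Q : Type v} [Group Q] {q : ℕ}
    (hQ : PowMulOnCentralExt.{u, v} Q q) (hq : ∀ a : Q, a ^ q = 1)
    {H : Type u} [Group H] (π : H →* Q) (hπ : Function.Surjective π) (n : ℕ)
    (hmul : ∀ z ∈ π.ker, ∀ w ∈ π.ker, (z * w) ^ n = z ^ n * w ^ n)
    (hcen : ∀ z ∈ π.ker, z ^ n ∈ Subgroup.center H) (x y : H) :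
    (x * y) ^ (q * n) = x ^ (q * n) * y ^ (q * n) := by
  let K : Subgroup H :=
    { carrier := {z | z ∈ π.ker ∧ z ^ n = 1}
      one_mem' := ⟨one_mem _, one_pow n⟩
      mul_mem' := fun {a b} ha hb =>
        ⟨mul_mem ha.1 hb.1, by rw [hmul a ha.1 b hb.1, ha.2, hb.2, one_mul]⟩
      inv_mem' := fun {a} ha => ⟨inv_mem ha.1, by rw [inv_pow, ha.2, inv_one]⟩ }
  have hK : ∀ z, z ∈ K ↔ z ∈ π.ker ∧ z ^ n = 1 := fun z => Iff.rfl
  have : K.Normal := ⟨fun z hz g => by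
    rw [hK] at hz ⊢
    refine ⟨π.normal_ker.conj_mem z hz.1 g, ?_⟩
    rw [conj_pow, hz.2, mul_one, mul_inv_cancel]⟩
  have hle : K ≤ π.ker := fun z hz => hz.1
  have hpow := hQ (H ⧸ K) (QuotientGroup.lift K π hle)
    (fun a => (hπ a).imp' (QuotientGroup.mk' K) fun h hh => hh) (by
      intro a ha
      obtain ⟨z, rfl⟩ := QuotientGroup.mk'_surjective K a
      have hz : z ∈ π.ker := ha
      rw [Subgroup.mem_center_iff]
      intro b
      obtain ⟨g, rfl⟩ := QuotientGroup.mk'_surjective K b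
      have hmem : ⁅z, g⁆ ∈ K := by
        have hg : g * z⁻¹ * g⁻¹ ∈ π.ker := π.normal_ker.conj_mem _ (inv_mem hz) g
        have e : ⁅z, g⁆ = z * (g * z⁻¹ * g⁻¹) := by
          rw [commutatorElement_def]; simp only [mul_assoc]
        rw [e]
        refine ⟨mul_mem hz hg, ?_⟩
        rw [hmul z hz _ hg, conj_pow,
          Subgroup.mem_center_iff.1 (hcen _ (inv_mem hz)) g, mul_inv_cancel_right, inv_pow,
          mul_inv_cancel]
      rw [← QuotientGroup.ker_mk' K, MonoidHom.mem_ker, map_commutatorElement,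
        commutatorElement_eq_one_iff_mul_comm] at hmem
      exact hmem.symm)
    (QuotientGroup.mk' K x) (QuotientGroup.mk' K y)
  have hmem : (x ^ q * y ^ q)⁻¹ * (x * y) ^ q ∈ K := by
    rw [← QuotientGroup.ker_mk' K, MonoidHom.mem_ker, map_mul, map_inv, inv_mul_eq_one]
    simpa only [map_mul, map_pow] using hpow.symm
  have hker : ∀ z : H, z ^ q ∈ π.ker := fun z => by rw [MonoidHom.mem_ker, map_pow, hq]
  have e : (x * y) ^ q = x ^ q * y ^ q * ((x ^ q * y ^ q)⁻¹ * (x * y) ^ q) := by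
    rw [mul_inv_cancel_left]
  rw [pow_mul, e, hmul _ (mul_mem (hker x) (hker y)) _ hmem.1, hmem.2, mul_one,
    hmul _ (hker x) _ (hker y), pow_mul, pow_mul]

/-- A central extension of an elementary abelian `p`-group has class at most two, and its
commutators have order dividing `p` since `p`-th powers are central. -/
theorem powMulOnCentralExt_of_elementary.{u, v} {p : ℕ} (hp : p.Prime) (hodd : Odd p)
    {Q : Type v} [Group Q] (hcomm : ∀ a b : Q, a * b = b * a) (hexp : ∀ a : Q, a ^ p = 1) :
    PowMulOnCentralExt.{u, v} Q p := by
  intro H _ π _ hcen x y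
  have hd : ⁅y⁻¹, x⁻¹⁆ ∈ Subgroup.center H := hcen (by
    rw [MonoidHom.mem_ker, map_commutatorElement, commutatorElement_eq_one_iff_mul_comm]
    exact hcomm _ _)
  have hdc : ∀ z, Commute ⁅y⁻¹, x⁻¹⁆ z := fun z => (Subgroup.mem_center_iff.1 hd z).symm
  refine mul_pow_prime_of_commutes hp hodd (d := ⁅y⁻¹, x⁻¹⁆) ?_ (hdc x) (hdc y) ?_
  · rw [commutatorElement_def]; group
  · have hyp : y ^ p ∈ Subgroup.center H := hcen (by rw [MonoidHom.mem_ker, map_pow, hexp])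
    have hconj : y * ⁅y⁻¹, x⁻¹⁆ = x⁻¹ * y * x⁻¹⁻¹ := by rw [commutatorElement_def]; group
    have h2 := congrArg (· ^ p) hconj
    simp only [(hdc y).symm.mul_pow, conj_pow] at h2
    rwa [Subgroup.mem_center_iff.1 hyp x⁻¹, mul_inv_cancel_right, mul_eq_left] at h2

/-- If a nilpotent powerful group is generated by elements killed by `p ^ k`, it is killed by
`p ^ k`: by induction `G / Z(G)` is, so the `p ^ k`-th power map is multiplicative on the
central extension `G` of `G / Z(G)`. -/
theorem pow_eq_one_of_generators.{u} {p : ℕ} (k : ℕ)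
    (hA : ∀ (Q : Type u) [Group Q] [Group.IsNilpotent Q], IsPowerful p Q →
      (∀ a : Q, a ^ p ^ k = 1) → PowMulOnCentralExt.{u, u} Q (p ^ k))
    (G : Type u) [Group G] [Group.IsNilpotent G] (hG : IsPowerful p G)
    (S : Set G) (hS : Subgroup.closure S = ⊤) (hpS : ∀ s ∈ S, s ^ p ^ k = 1) (g : G) :
    g ^ p ^ k = 1 := by
  revert hG S g
  refine Group.nilpotent_center_quotient_ind
    (P := fun G _ _ => IsPowerful p G → ∀ S : Set G, Subgroup.closure S = ⊤ →
      (∀ s ∈ S, s ^ p ^ k = 1) → ∀ g : G, g ^ p ^ k = 1) G ?_ ?_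
  · intros
    exact Subsingleton.elim _ _
  · intro G _ _ ih hG S hS hpS g
    have hs := QuotientGroup.mk'_surjective (Subgroup.center G)
    have hQ := hG.of_surjective _ hs
    have hmul := hA _ hQ (ih hQ (Set.image (QuotientGroup.mk' _) S) (by
      rw [← MonoidHom.map_closure, hS, ← MonoidHom.range_eq_map, MonoidHom.range_eq_top.2 hs]) (by
        rintro _ ⟨s, hs, rfl⟩
        rw [← map_pow, hpS s hs, map_one])) G _ hs (by rw [QuotientGroup.ker_mk'])
    have hg : g ∈ Subgroup.closure S := hS ▸ Subgroup.mem_top g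
    induction hg using Subgroup.closure_induction with
    | mem x hx => exact hpS x hx
    | one => exact one_pow _
    | mul x y _ _ hx hy => rw [hmul, hx, hy, one_mul]
    | inv x _ hx => rw [inv_pow, hx, inv_one]

/-- Induction on `k`: `℧(Q)` is powerful and killed by `p ^ k` when `Q` is killed by `p ^ (k + 1)`,
while `Q / ℧(Q)` is elementary abelian. -/
theorem IsPowerful.powMulOnCentralExt_aux.{u} {p : ℕ} (hp : p.Prime) (hodd : Odd p) (k : ℕ) :
    ∀ (Q : Type u) [Group Q] [Group.IsNilpotent Q], IsPowerful p Q →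
      (∀ a : Q, a ^ p ^ k = 1) → PowMulOnCentralExt.{u, u} Q (p ^ k) := by
  induction k with
  | zero =>
    intro Q _ _ _ _ H _ π _ _ x y
    simp
  | succ k ih =>
    intro Q _ _ hQ hexp H _ π hπ hcen x y
    set N := _root_.agemo p Q with hN
    have hNpow : IsPowerful p N := hQ.agemo hp hodd
    have hNexp : ∀ a : N, a ^ p ^ k = 1 := by
      refine pow_eq_one_of_generators k ih N hNpow
        (Set.preimage ((↑) : N → Q) {x : Q | ∃ g : Q, g ^ p = x}) (Subgroup.closure_closure_coe_preimage) ?_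
      rintro s ⟨g, hg⟩
      apply Subtype.ext
      rw [Subgroup.coe_pow, ← hg, ← pow_mul, ← pow_succ', hexp, Subgroup.coe_one]
    have hM := ih N hNpow hNexp (N.comap π) (π.subgroupComap N)
      (by
        rintro ⟨a, ha⟩
        obtain ⟨h, rfl⟩ := hπ a
        exact ⟨⟨h, ha⟩, rfl⟩)
      (by
        rintro ⟨z, hz⟩ hz'
        have : z ∈ π.ker := congrArg Subtype.val hz'
        rw [Subgroup.mem_center_iff]
        rintro ⟨w, hw⟩
        exact Subtype.ext (Subgroup.mem_center_iff.1 (hcen this) w))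
    have hker : ((QuotientGroup.mk' N).comp π).ker = N.comap π := by
      rw [← MonoidHom.comap_ker, QuotientGroup.ker_mk']
    have hel : PowMulOnCentralExt.{u, u} (Q ⧸ N) p := by
      refine powMulOnCentralExt_of_elementary hp hodd ?_ ?_
      · intro a b
        obtain ⟨a, rfl⟩ := QuotientGroup.mk'_surjective N a
        obtain ⟨b, rfl⟩ := QuotientGroup.mk'_surjective N b
        rw [← commutatorElement_eq_one_iff_mul_comm, ← map_commutatorElement, ← MonoidHom.mem_ker,
          QuotientGroup.ker_mk']
        exact hQ.commutator_mem a b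
      · intro a
        obtain ⟨a, rfl⟩ := QuotientGroup.mk'_surjective N a
        rw [← map_pow, ← MonoidHom.mem_ker, QuotientGroup.ker_mk']
        exact pow_mem_agemo p a
    rw [pow_succ']
    refine hel.mul_pow_mul ?_ ((QuotientGroup.mk' N).comp π)
      ((QuotientGroup.mk'_surjective N).comp hπ) (p ^ k) ?_ ?_ x y
    · intro a
      obtain ⟨a, rfl⟩ := QuotientGroup.mk'_surjective N a
      rw [← map_pow, ← MonoidHom.mem_ker, QuotientGroup.ker_mk']
      exact pow_mem_agemo p a
    · rw [hker]
      intro z hz w hw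
      exact congrArg Subtype.val (hM ⟨z, hz⟩ ⟨w, hw⟩)
    · rw [hker]
      intro z hz
      apply hcen
      rw [MonoidHom.mem_ker, map_pow]
      exact congrArg Subtype.val (hNexp ⟨π z, hz⟩)

/-- For a nilpotent powerful group `Q` killed by `p ^ k`, `p` odd, the `p ^ k`-th power map is
multiplicative on every central extension of `Q`. -/
theorem IsPowerful.powMulOnCentralExt.{u, v} {p : ℕ} (hp : p.Prime) (hodd : Odd p) {k : ℕ}
    {Q : Type v} [Group Q] [Group.IsNilpotent Q] (hQ : IsPowerful p Q)
    (hexp : ∀ a : Q, a ^ p ^ k = 1) : PowMulOnCentralExt.{u, v} Q (p ^ k) := by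
  intro H _ π hπ hcen
  -- `H ⧸ ker π` is a copy of `Q` in the universe of `H`
  let e := QuotientGroup.quotientKerEquivOfSurjective π hπ
  have : Group.IsNilpotent (H ⧸ π.ker) := Group.nilpotent_of_mulEquiv e.symm
  refine IsPowerful.powMulOnCentralExt_aux hp hodd k (H ⧸ π.ker)
    (hQ.of_surjective e.symm.toMonoidHom e.symm.surjective) (fun a => ?_) H
    (QuotientGroup.mk' π.ker) (QuotientGroup.mk'_surjective _) (by rwa [QuotientGroup.ker_mk'])
  apply e.injective
  rw [map_pow, hexp, map_one]

/-! ### The central extension defined by a cocycle -/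

/-- The central extension of `G` by `ℂˣ` defined by the cocycle `α`: pairs with multiplication
`(g, a) (h, b) = (g h, a b α(g, h))`. As `α` is not assumed normalized, the unit is
`(1, α(1, 1)⁻¹)`. -/
@[ext]
structure CocycleExt_s2 {G : Type*} [Group G] (α : Z2 G) where
  /-- the component in `G` -/
  base : G
  /-- the component in `ℂˣ` -/
  scalar : ℂˣ

namespace CocycleExt_s2

variable {G : Type*} [Group G] (α : Z2 G)

theorem cocycle_one_left_s2 (x : G) : α.1 1 x = α.1 1 1 := by
  have h := α.2 1 1 x
  simp only [one_mul] at h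
  exact (mul_right_cancel h).symm

theorem cocycle_one_right_s2 (x : G) : α.1 x 1 = α.1 1 1 := by
  have h := α.2 x 1 1
  simp only [mul_one] at h
  exact mul_left_cancel h

instance : Mul (CocycleExt_s2 α) :=
  ⟨fun u v => ⟨u.base * v.base, u.scalar * v.scalar * α.1 u.base v.base⟩⟩

instance : One (CocycleExt_s2 α) := ⟨⟨1, (α.1 1 1)⁻¹⟩⟩

instance : Inv (CocycleExt_s2 α) :=
  ⟨fun u => ⟨u.base⁻¹, (u.scalar * α.1 1 1 * α.1 u.base⁻¹ u.base)⁻¹⟩⟩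

variable {α} in
@[simp] theorem mul_base (u v : CocycleExt_s2 α) : (u * v).base = u.base * v.base := rfl

variable {α} in
@[simp] theorem mul_scalar (u v : CocycleExt_s2 α) :
    (u * v).scalar = u.scalar * v.scalar * α.1 u.base v.base := rfl

@[simp] theorem one_base : (1 : CocycleExt_s2 α).base = 1 := rfl

@[simp] theorem one_scalar : (1 : CocycleExt_s2 α).scalar = (α.1 1 1)⁻¹ := rfl

variable {α} in
@[simp] theorem inv_base (u : CocycleExt_s2 α) : (u⁻¹).base = u.base⁻¹ := rfl

variable {α} in
@[simp] theorem inv_scalar (u : CocycleExt_s2 α) :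
    (u⁻¹).scalar = (u.scalar * α.1 1 1 * α.1 u.base⁻¹ u.base)⁻¹ := rfl

instance : Group (CocycleExt_s2 α) := Group.ofLeftAxioms
  (fun u v w => by
    ext1
    · simp only [mul_base, mul_assoc]
    · have h := α.2 u.base v.base w.base
      simp only [mul_scalar, mul_base]
      calc u.scalar * v.scalar * α.1 u.base v.base * w.scalar * α.1 (u.base * v.base) w.base
          = u.scalar * v.scalar * w.scalar
            * (α.1 u.base v.base * α.1 (u.base * v.base) w.base) := by
            simp only [mul_comm, mul_left_comm, mul_assoc]
        _ = _ := by rw [h]; simp only [mul_comm, mul_left_comm, mul_assoc])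
  (fun u => by
    ext1
    · simp
    · simp only [mul_scalar, one_scalar, one_base, cocycle_one_left_s2]
      rw [mul_right_comm, inv_mul_cancel, one_mul])
  (fun u => by
    ext1
    · simp
    · simp only [mul_scalar, one_scalar, inv_base, inv_scalar, mul_inv]
      calc _ = u.scalar⁻¹ * u.scalar * ((α.1 u.base⁻¹ u.base)⁻¹ * α.1 u.base⁻¹ u.base)
            * (α.1 1 1)⁻¹ := by simp only [mul_comm, mul_left_comm, mul_assoc]
        _ = _ := by rw [inv_mul_cancel, inv_mul_cancel, one_mul, one_mul])

/-- The projection of the extension onto `G`. -/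
def proj : CocycleExt_s2 α →* G where
  toFun := base
  map_one' := rfl
  map_mul' _ _ := rfl

/-- The inclusion of the kernel `ℂˣ` into the extension. -/
def incl : ℂˣ →* CocycleExt_s2 α where
  toFun a := ⟨1, a * (α.1 1 1)⁻¹⟩
  map_one' := by ext1 <;> simp
  map_mul' a b := by
    ext1
    · simp
    · simp only [mul_scalar]
      calc _ = a * b * (α.1 1 1)⁻¹ * ((α.1 1 1)⁻¹ * α.1 1 1) := by
            rw [inv_mul_cancel, mul_one]
        _ = _ := by simp only [mul_comm, mul_left_comm, mul_assoc]

/-- The standard set-theoretic section of the projection. -/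
def sec (g : G) : CocycleExt_s2 α := ⟨g, 1⟩

theorem incl_injective : Function.Injective (incl α) := fun a b h => by
  have := congrArg scalar h
  exact mul_right_cancel this

theorem proj_surjective : Function.Surjective (proj α) := fun g => ⟨sec α g, rfl⟩

theorem exists_incl_of_mem_ker {z : CocycleExt_s2 α} (hz : z ∈ (proj α).ker) :
    ∃ a, incl α a = z := by
  refine ⟨z.scalar * α.1 1 1, ?_⟩
  ext1
  · exact hz.symm
  · exact mul_inv_cancel_right _ _

theorem ker_proj_le_center : (proj α).ker ≤ Subgroup.center (CocycleExt_s2 α) := by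
  intro z hz
  have hz' : z.base = 1 := hz
  rw [Subgroup.mem_center_iff]
  intro g
  ext1
  · simp [hz']
  · simp only [mul_scalar, hz', cocycle_one_left_s2, cocycle_one_right_s2, mul_comm g.scalar]

theorem sec_mul_sec (g h : G) : sec α g * sec α h = incl α (α.1 g h) * sec α (g * h) := by
  ext1
  · exact (one_mul _).symm
  · change 1 * 1 * α.1 g h = α.1 g h * (α.1 1 1)⁻¹ * 1 * α.1 1 (g * h)
    rw [cocycle_one_left_s2 α (g * h)]
    simp

end CocycleExt_s2

theorem B2_le_Z2 (G : Type*) [Group G] : B2 G ≤ Z2 G := by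
  rintro α ⟨ζ, hζ⟩ x y z
  rw [hζ, hζ, hζ, hζ, mul_assoc x y z]
  calc _ = ζ x * ζ y * ζ z * (ζ (x * (y * z)))⁻¹ * ((ζ (x * y))⁻¹ * ζ (x * y)) := by
        simp only [mul_comm, mul_left_comm, mul_assoc]
    _ = ζ x * ζ y * ζ z * (ζ (x * (y * z)))⁻¹ * ((ζ (y * z))⁻¹ * ζ (y * z)) := by
        rw [inv_mul_cancel, inv_mul_cancel]
    _ = _ := by simp only [mul_comm, mul_left_comm, mul_assoc]

open CocycleExt_s2 in
/-- If the `e`-th power map is a homomorphism to the kernel `ℂˣ` on the preimage of `ker φ` in the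
extension defined by `α`, then `αᵉ` is cohomologous to an inflation from `Q`: splitting
`sec g = t (φ g) · n g` along a transversal `t` of the preimage of `ker φ`, the powers `(n g)ᵉ`
provide the coboundary, and the powers of `t (q q')⁻¹ t q t q'` the inflated cocycle. -/
theorem exists_inflation {G Q : Type*} [Group G] [Group Q] (α : Z2 G) (φ : G →* Q)
    (hφ : Function.Surjective φ) (e : ℕ)
    (hker : ∀ z ∈ φ.ker.comap (proj α), z ^ e ∈ (proj α).ker)
    (hmul : ∀ z ∈ φ.ker.comap (proj α), ∀ w ∈ φ.ker.comap (proj α),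
      (z * w) ^ e = z ^ e * w ^ e) :
    ∃ (β : Z2 Q) (F : G → ℂˣ), ∀ g h : G,
      α.1 g h ^ e = β.1 (φ g) (φ h) * (F g * F h * (F (g * h))⁻¹) := by
  set M := φ.ker.comap (proj α) with hM
  have memM : ∀ z, z ∈ M ↔ φ (proj α z) = 1 := fun z => Iff.rfl
  obtain ⟨τ, hτ⟩ := hφ.hasRightInverse
  let t : Q → CocycleExt_s2 α := fun q => sec α (τ q)
  have ht : ∀ q, φ (proj α (t q)) = q := hτ
  have hs : ∀ g, proj α (sec α g) = g := fun g => rfl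
  let n : G → CocycleExt_s2 α := fun g => (t (φ g))⁻¹ * sec α g
  have hn : ∀ g, n g ∈ M := fun g => by
    rw [memM, map_mul, map_mul, map_inv, map_inv, ht, hs, inv_mul_cancel]
  let b : Q → Q → CocycleExt_s2 α := fun q q' => (t (q * q'))⁻¹ * (t q * t q')
  have hb : ∀ q q', b q q' ∈ M := fun q q' => by
    simp only [b, memM, map_mul, map_inv, ht, inv_mul_cancel]
  choose f hf using fun z : M => exists_incl_of_mem_ker α (hker z.1 z.2)
  let F : G → ℂˣ := fun g => f ⟨n g, hn g⟩
  let β : Q → Q → ℂˣ := fun q q' => f ⟨b q q', hb q q'⟩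
  have hF : ∀ g, incl α (F g) = n g ^ e := fun g => hf ⟨n g, hn g⟩
  have hβ : ∀ q q', incl α (β q q') = b q q' ^ e := fun q q' => hf ⟨b q q', hb q q'⟩
  have hincl : ∀ a, incl α a ∈ M := fun a => by
    rw [memM]; exact map_one φ
  have key : ∀ g h : G, α.1 g h ^ e * F (g * h) = β (φ g) (φ h) * (F g * F h) := by
    intro g h
    apply incl_injective α
    have hconj : (t (φ h))⁻¹ * n g * (t (φ h))⁻¹⁻¹ ∈ M := by
      rw [memM]
      simp only [map_mul, map_inv, (memM _).1 (hn g)]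
      simp
    have hcI : ∀ a, ∀ z, z * incl α a = incl α a * z := fun a z =>
      Subgroup.mem_center_iff.1 (ker_proj_le_center α (show incl α a ∈ (proj α).ker from rfl)) z
    have e1 : incl α (α.1 g h) * n (g * h)
        = b (φ g) (φ h) * ((t (φ h))⁻¹ * n g * (t (φ h))⁻¹⁻¹ * n h) := by
      have h1 : incl α (α.1 g h) * n (g * h)
          = (t (φ (g * h)))⁻¹ * (incl α (α.1 g h) * sec α (g * h)) := by
        simp only [n]
        rw [← mul_assoc, ← hcI, mul_assoc]
      rw [h1, ← sec_mul_sec]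
      simp only [b, n, map_mul]
      group
    have e2 := congrArg (· ^ e) e1
    rw [hmul _ (hincl _) _ (hn _), hmul _ (hb _ _) _ (mul_mem hconj (hn h)),
      hmul _ hconj _ (hn h), conj_pow] at e2
    have hcg : (t (φ h))⁻¹ * n g ^ e * (t (φ h))⁻¹⁻¹ = n g ^ e := by
      rw [Subgroup.mem_center_iff.1 (ker_proj_le_center α (hker _ (hn g))), mul_inv_cancel_right]
    rw [hcg] at e2
    rw [map_mul, map_mul, map_mul, map_pow, hF, hF, hF, hβ, e2]
  have key' : ∀ g h : G, β (φ g) (φ h) = α.1 g h ^ e * (F g * F h * (F (g * h))⁻¹)⁻¹ := by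
    intro g h
    rw [eq_mul_inv_iff_mul_eq, ← mul_assoc, ← key, mul_inv_cancel_right]
  refine ⟨⟨β, ?_⟩, F, fun g h => ?_⟩
  · have hc : (fun g h => β (φ g) (φ h)) ∈ Z2 G := by
      have : (fun g h => β (φ g) (φ h))
          = α.1 ^ e * (fun g h => F g * F h * (F (g * h))⁻¹)⁻¹ := by
        funext g h
        exact key' g h
      rw [this]
      refine mul_mem (pow_mem α.2 e) (inv_mem (B2_le_Z2 G ⟨F, fun _ _ => rfl⟩))
    intro x y z
    obtain ⟨x, rfl⟩ := hφ x
    obtain ⟨y, rfl⟩ := hφ y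
    obtain ⟨z, rfl⟩ := hφ z
    simpa only [map_mul] using hc x y z
  · change _ = β (φ g) (φ h) * _
    rw [key', inv_mul_cancel_right]

theorem mk_pow_eq_one_iff {G : Type*} [Group G] (α : Z2 G) (n : ℕ) :
    ((α : SchurM G)) ^ n = 1 ↔ ∃ ζ : G → ℂˣ, ∀ x y : G,
      α.1 x y ^ n = ζ x * ζ y * (ζ (x * y))⁻¹ := by
  rw [← QuotientGroup.mk_pow, QuotientGroup.eq_one_iff, Subgroup.mem_subgroupOf]
  exact Iff.rfl

theorem coboundary_mul_pow {A : Type*} [CommGroup A] (a b c x y z : A) (m : ℕ) :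
    a * b * c⁻¹ * (x * y * z⁻¹) ^ m = a * x ^ m * (b * y ^ m) * (c * z ^ m)⁻¹ := by
  rw [mul_pow, mul_pow, inv_pow, mul_inv, mul_mul_mul_comm, mul_mul_mul_comm a]

/-! ### The subnormal series -/

/-- On the preimage of `G_j` in a central extension `E` of `G`, raising to the power
`e = ∏_{i ≥ j} exp Q_i` is a homomorphism into the kernel `A` of `E → G`. Descending induction on
`j`: the power map for `j + 1` is a homomorphism with central values on the kernel of the map from
the preimage of `G_j` onto `Q_j`, so `PowMulOnCentralExt.mul_pow_mul` applies. -/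
theorem pow_mul_on_preimage
    (p : ℕ) (hp : p.Prime) (hodd : Odd p)
    (G : Type*) [Group G] [Finite G] (hG : IsPGroup p G)
    (r : ℕ) (GG : Fin (r + 1) → Subgroup G)
    (hbot : GG (Fin.last r) = ⊥)
    (Q : Fin r → Type*) [∀ i, Group (Q i)]
    (φ : ∀ i : Fin r, ↥(GG i.castSucc) →* Q i)
    (hsurj : ∀ i, Function.Surjective (φ i))
    (hker : ∀ i, (φ i).ker = (GG i.succ).subgroupOf (GG i.castSucc))
    (hpow : ∀ i, IsPowerful p (Q i))
    {E : Type*} [Group E] (π : E →* G) (hπ : Function.Surjective π)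
    (hcen : π.ker ≤ Subgroup.center E) (j : Fin (r + 1)) :
    (∀ z ∈ (GG j).comap π,
      z ^ (∏ i ∈ Finset.univ.filter (fun i : Fin r => j ≤ i.castSucc),
        Monoid.exponent (Q i)) ∈ π.ker) ∧
    ∀ z ∈ (GG j).comap π, ∀ w ∈ (GG j).comap π,
      (z * w) ^ (∏ i ∈ Finset.univ.filter (fun i : Fin r => j ≤ i.castSucc),
        Monoid.exponent (Q i)) =
      z ^ (∏ i ∈ Finset.univ.filter (fun i : Fin r => j ≤ i.castSucc), Monoid.exponent (Q i)) *
      w ^ (∏ i ∈ Finset.univ.filter (fun i : Fin r => j ≤ i.castSucc), Monoid.exponent (Q i)) := by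
  have : Fact p.Prime := ⟨hp⟩
  induction j using Fin.reverseInduction with
  | last =>
    have h0 : Finset.univ.filter (fun i : Fin r => Fin.last r ≤ i.castSucc) = ∅ := by
      refine Finset.filter_eq_empty_iff.2 fun i _ => ?_
      exact not_le.2 (Fin.castSucc_lt_last i)
    simp only [h0, Finset.prod_empty, pow_one, hbot]
    exact ⟨fun z hz => hz, fun _ _ _ _ => trivial⟩
  | cast j ih =>
    have h0 : Finset.univ.filter (fun i : Fin r => j.castSucc ≤ i.castSucc)
        = insert j (Finset.univ.filter (fun i : Fin r => j.succ ≤ i.castSucc)) := by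
      ext i
      simp only [Finset.mem_filter, Finset.mem_univ, true_and, Finset.mem_insert,
        Fin.le_def, Fin.val_castSucc, Fin.val_succ, Fin.ext_iff]
      omega
    have hj : j ∉ Finset.univ.filter (fun i : Fin r => j.succ ≤ i.castSucc) := by
      simp [Fin.le_def]
    rw [h0, Finset.prod_insert hj]
    set e := ∏ i ∈ Finset.univ.filter (fun i : Fin r => j.succ ≤ i.castSucc),
      Monoid.exponent (Q i) with he
    clear_value e
    obtain ⟨ih1, ih2⟩ := ih
    have : Finite (Q j) := Finite.of_surjective _ (hsurj j)
    have hQp : IsPGroup p (Q j) := (hG.to_subgroup _).of_surjective (φ j) (hsurj j)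
    have : Group.IsNilpotent (Q j) := hQp.isNilpotent
    obtain ⟨k, hk⟩ : ∃ k, Monoid.exponent (Q j) = p ^ k := by
      obtain ⟨m, hm⟩ := IsPGroup.iff_card.1 hQp
      have hd : Monoid.exponent (Q j) ∣ p ^ m := hm ▸ Group.exponent_dvd_nat_card
      obtain ⟨k, _, hk⟩ := (Nat.dvd_prime_pow hp).1 hd
      exact ⟨k, hk⟩
    have hexp : ∀ a : Q j, a ^ p ^ k = 1 := fun a => hk ▸ Monoid.pow_exponent_eq_one a
    have hA := (hpow j).powMulOnCentralExt hp hodd hexp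
    let ψ : (GG j.castSucc).comap π →* Q j := (φ j).comp (π.subgroupComap _)
    have hψ : Function.Surjective ψ := by
      intro a
      obtain ⟨⟨g, hg⟩, rfl⟩ := hsurj j a
      obtain ⟨z, rfl⟩ := hπ g
      exact ⟨⟨z, hg⟩, rfl⟩
    have hψker : ∀ z, z ∈ ψ.ker → z.1 ∈ (GG j.succ).comap π := by
      intro z hz
      have h1 : π.subgroupComap _ z ∈ (φ j).ker := hz
      rw [hker] at h1
      exact h1
    rw [hk]
    refine ⟨fun z hz => ?_, fun z hz w hw => ?_⟩
    · rw [pow_mul]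
      refine ih1 _ (hψker (⟨z, hz⟩ ^ p ^ k) ?_)
      rw [MonoidHom.mem_ker, map_pow, hexp]
    · refine congrArg Subtype.val (hA.mul_pow_mul hexp ψ hψ e ?_ ?_ ⟨z, hz⟩ ⟨w, hw⟩)
      · intro z hz w hw
        exact Subtype.ext (ih2 _ (hψker z hz) _ (hψker w hw))
      · intro z hz
        rw [Subgroup.mem_center_iff]
        intro g
        exact Subtype.ext (Subgroup.mem_center_iff.1 (hcen (ih1 _ (hψker z hz))) g)

/-- Let `p` be an odd prime and `G` a finite `p`-group with a subnormal
series `G = G₀ > G₁ > ⋯ > G_r = 1` whose factors `Q i = G_{i-1}/G_i` (here realized as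
groups `Q i` together with surjections `↥(GG i) → Q i` with kernel `GG (i+1)`) are all
powerful `p`-groups. Then `exp M(G)` divides `(∏_{j=2}^r exp Q_j) · exp M(Q₁)`. -/
theorem exponent_schurMultiplier_dvd_of_powerful_subnormal_series
    (p : ℕ) (hp : p.Prime) (hodd : Odd p)
    (G : Type*) [Group G] [Finite G] (hG : IsPGroup p G)
    (r : ℕ) (hr : 0 < r) (GG : Fin (r + 1) → Subgroup G)
    (htop : GG 0 = ⊤) (hbot : GG (Fin.last r) = ⊥) (hanti : StrictAnti GG)
    (Q : Fin r → Type*) [∀ i, Group (Q i)]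
    (φ : ∀ i : Fin r, ↥(GG i.castSucc) →* Q i)
    (hsurj : ∀ i, Function.Surjective (φ i))
    (hker : ∀ i, (φ i).ker = (GG i.succ).subgroupOf (GG i.castSucc))
    (hpow : ∀ i, IsPowerful p (Q i)) :
    Monoid.exponent (SchurM G) ∣
      (∏ i ∈ Finset.univ.filter (fun i : Fin r => i ≠ ⟨0, hr⟩), Monoid.exponent (Q i)) *
        Monoid.exponent (SchurM (Q ⟨0, hr⟩)) := by
  have htop' : GG (⟨0, hr⟩ : Fin r).castSucc = ⊤ := htop
  -- `Φ : G → Q₁` is the first quotient map, with `G₀ = ⊤` identified with `G`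
  let Φ : G →* Q ⟨0, hr⟩ :=
    (φ ⟨0, hr⟩).comp ((MonoidHom.id G).codRestrict _ fun g => htop' ▸ Subgroup.mem_top g)
  have hΦ : Function.Surjective Φ := fun a => by
    obtain ⟨⟨g, hg⟩, rfl⟩ := hsurj ⟨0, hr⟩ a
    exact ⟨g, rfl⟩
  have hΦker : Φ.ker = GG (⟨0, hr⟩ : Fin r).succ := by
    ext g
    have h1 : g ∈ Φ.ker ↔ (⟨g, htop' ▸ Subgroup.mem_top g⟩ : GG (⟨0, hr⟩ : Fin r).castSucc) ∈
      (φ ⟨0, hr⟩).ker := Iff.rfl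
    rw [h1, hker]
    exact Iff.rfl
  have hfilter : Finset.univ.filter (fun i : Fin r => i ≠ ⟨0, hr⟩)
      = Finset.univ.filter (fun i : Fin r => (⟨0, hr⟩ : Fin r).succ ≤ i.castSucc) := by
    ext i
    simp only [Finset.mem_filter, Finset.mem_univ, true_and, Fin.le_def, Fin.val_castSucc,
      Fin.val_succ, Fin.ext_iff, ne_eq]
    omega
  rw [hfilter]
  rw [Monoid.exponent_dvd_iff_forall_pow_eq_one]
  intro a
  obtain ⟨α, rfl⟩ := QuotientGroup.mk_surjective a
  obtain ⟨hE1, hE2⟩ := pow_mul_on_preimage p hp hodd G hG r GG hbot Q φ hsurj hker hpow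
    (CocycleExt_s2.proj α) (CocycleExt_s2.proj_surjective α) (CocycleExt_s2.ker_proj_le_center α)
    (⟨0, hr⟩ : Fin r).succ
  rw [← hΦker] at hE1 hE2
  obtain ⟨β, F, hβ⟩ := exists_inflation α Φ hΦ _ hE1 hE2
  obtain ⟨ζ, hζ⟩ := (mk_pow_eq_one_iff β _).1
    (Monoid.pow_exponent_eq_one (β : SchurM (Q ⟨0, hr⟩)))
  rw [mk_pow_eq_one_iff]
  refine ⟨fun g => ζ (Φ g) * F g ^ Monoid.exponent (SchurM (Q ⟨0, hr⟩)), fun g h => ?_⟩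
  rw [pow_mul, hβ, mul_pow, hζ, ← map_mul Φ]
  exact coboundary_mul_pow _ _ _ _ _ _ _
end

section
/- Let G be a finite group and N a normal subgroup of G. Then exp M(G) divides lcm(exp Zu(N), exp N) · exp M(G/N). -/
/-- A 2-cocycle is unitary if `∏_{j=0}^{o(g)-1} α(g, g^j) = 1` for every `g`. -/
def IsUnitary {G : Type*} [Group G] (α : G → G → ℂˣ) : Prop :=
  ∀ g : G, ∏ j ∈ Finset.range (orderOf g), α g (g ^ j) = 1

/-- The group `Zu(G)` of unitary 2-cocycles on `G`. -/
def Zu (G : Type*) [Group G] : Subgroup (G → G → ℂˣ) where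
  carrier := {α | IsCocycle α ∧ IsUnitary α}
  one_mem' := ⟨(Z2 G).one_mem, by intro g; simp⟩
  mul_mem' := by
    rintro a b ⟨ha, hau⟩ ⟨hb, hbu⟩
    refine ⟨(Z2 G).mul_mem ha hb, fun g => ?_⟩
    simp only [Pi.mul_apply]
    rw [Finset.prod_mul_distrib, hau g, hbu g, mul_one]
  inv_mem' := by
    rintro a ⟨ha, hau⟩
    refine ⟨(Z2 G).inv_mem ha, fun g => ?_⟩
    simp only [Pi.inv_apply]
    rw [Finset.prod_inv_distrib, hau g, inv_one]

/-- The twisted basis element `u_g`, realised as the permutation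
`(c, h) ↦ (α(g,h) c, g h)` of `ℂˣ × G` (left multiplication in the extension defined by `α`). -/
def twist {G : Type*} [Group G] (α : G → G → ℂˣ) (g : G) : Equiv.Perm (ℂˣ × G) where
  toFun p := (α g p.2 * p.1, g * p.2)
  invFun p := ((α g (g⁻¹ * p.2))⁻¹ * p.1, g⁻¹ * p.2)
  left_inv p := by simp
  right_inv p := by simp

/-- The central scalars, acting on `ℂˣ × G` by multiplication on the first coordinate. -/
def scal (G : Type*) [Group G] : ℂˣ →* Equiv.Perm (ℂˣ × G) where
  toFun c :=
    { toFun := fun p => (c * p.1, p.2)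
      invFun := fun p => (c⁻¹ * p.1, p.2)
      left_inv := fun p => by simp
      right_inv := fun p => by simp }
  map_one' := by ext p <;> simp
  map_mul' a b := by ext p <;> simp [mul_assoc]

lemma coboundary_mem_Z2 {G : Type*} [Group G] (ζ : G → ℂˣ) :
    (fun g h => ζ g * ζ h * (ζ (g * h))⁻¹ : G → G → ℂˣ) ∈ Z2 G := by
  intro x y z
  calc ζ x * ζ y * (ζ (x * y))⁻¹ * (ζ (x * y) * ζ z * (ζ (x * y * z))⁻¹)
      = ζ x * ζ y * ζ z * (ζ (x * y * z))⁻¹ := by simp only [mul_assoc, inv_mul_cancel_left]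
    _ = ζ x * ζ (y * z) * (ζ (x * (y * z)))⁻¹ * (ζ y * ζ z * (ζ (y * z))⁻¹) := by
      rw [mul_assoc x y z, mul_comm _ (ζ y * ζ z * (ζ (y * z))⁻¹), mul_comm (ζ x) (ζ (y * z))]
      simp only [mul_assoc, inv_mul_cancel_left]
      rw [← mul_assoc (ζ x), mul_comm (ζ x)]
      simp only [mul_assoc, mul_left_comm]

section Twisted

variable {G : Type*} [Group G] {α : G → G → ℂˣ}

lemma scal_injective : Function.Injective (scal G) := by
  intro a b h
  have := congrArg (fun e : Equiv.Perm (ℂˣ × G) => (e (1, 1)).1) h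
  simpa [scal] using this

lemma scal_comm (c : ℂˣ) (g : G) : Commute (scal G c) (twist α g) := by
  refine Equiv.ext fun p => Prod.ext ?_ ?_
  · simp [scal, twist, mul_left_comm]
  · simp [scal, twist]

lemma twist_mul (hα : IsCocycle α) (x y : G) :
    twist α x * twist α y = scal G (α x y) * twist α (x * y) := by
  refine Equiv.ext fun p => Prod.ext ?_ ?_
  · simp [scal, twist, ← mul_assoc, hα x y p.2]
  · simp [scal, twist, mul_assoc]

lemma twist_pow_mul (hα : IsCocycle α) (g : G) (k : ℕ) :
    twist α g ^ k * twist α 1 =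
      scal G (∏ j ∈ Finset.range k, α g (g ^ j)) * twist α (g ^ k) := by
  induction k with
  | zero => simp
  | succ k ih =>
    rw [pow_succ', mul_assoc, ih, ← mul_assoc, ← (scal_comm _ g).eq, mul_assoc, twist_mul hα,
      ← mul_assoc, ← map_mul, Finset.prod_range_succ, ← pow_succ']

lemma twist_pow_orderOf (hα : IsCocycle α) (hu : IsUnitary α) (g : G) :
    twist α g ^ orderOf g = 1 := by
  have h := twist_pow_mul hα g (orderOf g)
  rw [hu g, pow_orderOf_eq_one] at h
  simpa using h

/-- For a unitary cocycle, the scalar relating `u_g u_x u_g⁻¹` to `u_{g x g⁻¹}` is a root of unity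
of order dividing `o(x)`. -/
lemma conj_scalar_pow_orderOf (hα : IsCocycle α) (hu : IsUnitary α) (g x : G) :
    (α g x * (α (g * x * g⁻¹) g)⁻¹) ^ orderOf x = 1 := by
  have h1 := twist_mul hα g x
  have h2 := twist_mul hα (g * x * g⁻¹) g
  rw [inv_mul_cancel_right] at h2
  have h3 : twist α g * twist α x * (twist α g)⁻¹ =
      scal G (α g x * (α (g * x * g⁻¹) g)⁻¹) * twist α (g * x * g⁻¹) := by
    rw [mul_inv_eq_iff_eq_mul, mul_assoc, h2, h1, ← mul_assoc, ← map_mul, inv_mul_cancel_right]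
  have h4 := congrArg (· ^ orderOf x) h3
  have ho : orderOf (g * x * g⁻¹) = orderOf x := by
    simpa using MulEquiv.orderOf_eq (MulAut.conj g) x
  have h5 : twist α (g * x * g⁻¹) ^ orderOf x = 1 := by
    rw [← ho]; exact twist_pow_orderOf hα hu _
  simp only [conj_pow, twist_pow_orderOf hα hu x, (scal_comm _ _).mul_pow, h5, mul_one,
    mul_inv_cancel, ← map_pow] at h4
  exact scal_injective (by rw [← h4, map_one])

/-- A cocycle of `G` whose twisted group contains `{v_x | x ∈ N}` as a normal copy of `N` is
cohomologous to the inflation of a cocycle of `G ⧸ N`. -/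
lemma exists_inflation_s4 (hα : IsCocycle α) (N : Subgroup G) [N.Normal]
    (h1 : ∀ x ∈ N, ∀ y ∈ N, α x y = 1) (h2 : ∀ g, ∀ x ∈ N, α g x = α (g * x * g⁻¹) g) :
    ∃ β : (G ⧸ N) → (G ⧸ N) → ℂˣ, IsCocycle β ∧ ∃ ζ : G → ℂˣ,
      ∀ g h : G, α g h * (ζ g * ζ h * (ζ (g * h))⁻¹) = β g h := by
  let s : G → G := fun g => ((g : G ⧸ N)).out
  let n : G → G := fun g => g * (s g)⁻¹
  let ζ : G → ℂˣ := fun g => α (n g) (s g)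
  let β : (G ⧸ N) → (G ⧸ N) → ℂˣ := fun a b => α a.out b.out * (ζ (a.out * b.out))⁻¹
  have hs : ∀ g, ((s g : G) : G ⧸ N) = g := fun g => QuotientGroup.out_eq' _
  have hn : ∀ g, n g ∈ N := fun g => by
    rw [← QuotientGroup.eq_one_iff]
    simp [n, hs]
  have hns : ∀ g, n g * s g = g := fun g => by simp [n]
  have hw : ∀ g, twist α (n g) * twist α (s g) = scal G (ζ g) * twist α g := fun g => by
    rw [twist_mul hα, hns]
  have hN : ∀ x ∈ N, ∀ y ∈ N, twist α x * twist α y = twist α (x * y) := fun x hx y hy => by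
    rw [twist_mul hα, h1 x hx y hy, map_one, one_mul]
  have hc : ∀ g, ∀ x ∈ N, twist α g * twist α x = twist α (g * x * g⁻¹) * twist α g :=
    fun g x hx => by
      rw [twist_mul hα, twist_mul hα, inv_mul_cancel_right, h2 g x hx]
  have key : ∀ g h, (twist α (n g) * twist α (s g)) * (twist α (n h) * twist α (s h)) =
      scal G (β g h) * (twist α (n (g * h)) * twist α (s (g * h))) := fun g h => by
    have hy : s g * n h * (s g)⁻¹ ∈ N := Subgroup.Normal.conj_mem inferInstance _ (hn h) _
    have hst : s (s g * s h) = s (g * h) := by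
      change ((s g * s h : G) : G ⧸ N).out = ((g * h : G) : G ⧸ N).out
      rw [QuotientGroup.mk_mul, hs, hs, QuotientGroup.mk_mul]
    have e1 : twist α (s g * s h) = scal G (ζ (s g * s h))⁻¹ *
        (twist α (n (s g * s h)) * twist α (s (g * h))) := by
      rw [← hst, hw, ← mul_assoc, ← map_mul, inv_mul_cancel, map_one, one_mul]
    have e2 : n g * (s g * n h * (s g)⁻¹) * n (s g * s h) = n (g * h) := by
      simp only [n, hst]; group
    calc (twist α (n g) * twist α (s g)) * (twist α (n h) * twist α (s h))
        = twist α (n g) * (twist α (s g) * twist α (n h)) * twist α (s h) := by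
          simp only [mul_assoc]
      _ = (twist α (n g) * twist α (s g * n h * (s g)⁻¹)) * (twist α (s g) * twist α (s h)) := by
          rw [hc _ _ (hn h)]; simp only [mul_assoc]
      _ = twist α (n g * (s g * n h * (s g)⁻¹)) * (scal G (β g h) *
            (twist α (n (s g * s h)) * twist α (s (g * h)))) := by
          rw [hN _ (hn g) _ hy, twist_mul hα (s g) (s h), e1, ← mul_assoc (scal G _) (scal G _),
            ← map_mul]
      _ = scal G (β g h) * (twist α (n g * (s g * n h * (s g)⁻¹)) * twist α (n (s g * s h)) *
            twist α (s (g * h))) := by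
          rw [← mul_assoc, ← (scal_comm _ _).eq]; simp only [mul_assoc]
      _ = _ := by
          rw [hN _ (N.mul_mem (hn g) hy) _ (hn _), e2]
  have main : ∀ g h : G, α g h * (ζ g * ζ h * (ζ (g * h))⁻¹) = β g h := fun g h => by
    have k := key g h
    rw [hw, hw, hw, mul_assoc, ← mul_assoc (twist α g), ← (scal_comm _ g).eq, mul_assoc,
      twist_mul hα, ← mul_assoc, ← mul_assoc, ← mul_assoc, mul_left_inj, ← map_mul, ← map_mul,
      ← map_mul] at k
    have k' := scal_injective k
    rw [← mul_assoc, mul_inv_eq_iff_eq_mul, ← k', mul_comm]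
  refine ⟨β, ?_, ζ, main⟩
  intro a b c
  induction a using QuotientGroup.induction_on with | H x => ?_
  induction b using QuotientGroup.induction_on with | H y => ?_
  induction c using QuotientGroup.induction_on with | H z => ?_
  have hB : (fun g h => ζ g * ζ h * (ζ (g * h))⁻¹ : G → G → ℂˣ) ∈ Z2 G :=
    coboundary_mem_Z2 ζ
  have hm := (Z2 G).mul_mem (show α ∈ Z2 G from hα) hB x y z
  simp only [Pi.mul_apply, main] at hm
  simpa only [QuotientGroup.mk_mul] using hm

end Twisted

lemma exists_unit_root (c : ℂˣ) {k : ℕ} (hk : 0 < k) : ∃ w : ℂˣ, w ^ k = c := by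
  obtain ⟨z, hz⟩ := IsAlgClosed.exists_pow_nat_eq (c : ℂ) hk
  have hz0 : z ≠ 0 := by
    rintro rfl
    rw [zero_pow hk.ne'] at hz
    exact c.ne_zero hz.symm
  exact ⟨Units.mk0 z hz0, Units.ext (by simpa using hz)⟩

/-- Every cocycle on a finite group becomes unitary after multiplication by a coboundary. -/
lemma exists_unitary {G : Type*} [Group G] [Finite G] {α : G → G → ℂˣ} (hα : α ∈ Z2 G) :
    ∃ b ∈ B2 G, IsCocycle (α * b) ∧ IsUnitary (α * b) := by
  choose ζ hζ using fun g : G =>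
    exists_unit_root (∏ j ∈ Finset.range (orderOf g), α g (g ^ j))⁻¹ (orderOf_pos g)
  refine ⟨fun x y => ζ x * ζ y * (ζ (x * y))⁻¹, ⟨ζ, fun _ _ => rfl⟩, ?_, ?_⟩
  · exact (Z2 G).mul_mem hα (coboundary_mem_Z2 ζ)
  · intro g
    -- the product of the coboundary along the powers of `g` telescopes to `ζ g ^ o(g)`
    have ht : ∀ k : ℕ, ∏ j ∈ Finset.range k, (ζ g * ζ (g ^ j) * (ζ (g * g ^ j))⁻¹) =
        ζ g ^ k * ζ 1 * (ζ (g ^ k))⁻¹ := by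
      intro k
      induction k with
      | zero => simp
      | succ k ih =>
        rw [Finset.prod_range_succ, ih, ← pow_succ', pow_succ (ζ g)]
        simp only [mul_assoc]
        rw [mul_left_comm (ζ g) (ζ (g ^ k)), inv_mul_cancel_left, mul_left_comm (ζ 1)]
    simp only [Pi.mul_apply]
    rw [Finset.prod_mul_distrib, ht, pow_orderOf_eq_one, hζ]
    simp

/-- For a finite group `G` and a normal subgroup `N`,
`exp M(G)` divides `lcm(exp Zu(N), exp N) · exp M(G/N)`. -/
theorem exponent_schurMultiplier_dvd_lcm_mul_quotient
    (G : Type*) [Group G] [Finite G] (N : Subgroup G) [N.Normal] :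
    Monoid.exponent (SchurM G) ∣
      Nat.lcm (Monoid.exponent ↥(Zu ↥N)) (Monoid.exponent ↥N) *
        Monoid.exponent (SchurM (G ⧸ N)) := by
  set n := Nat.lcm (Monoid.exponent ↥(Zu ↥N)) (Monoid.exponent ↥N) with hn
  set m := Monoid.exponent (SchurM (G ⧸ N)) with hm
  refine Monoid.exponent_dvd_of_forall_pow_eq_one fun q => ?_
  induction q using QuotientGroup.induction_on with | H a => ?_
  obtain ⟨α₀, hα₀⟩ := a
  rw [← QuotientGroup.mk_pow, QuotientGroup.eq_one_iff, Subgroup.mem_subgroupOf]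
  change α₀ ^ (n * m) ∈ B2 G
  obtain ⟨b, hb, hc, hu⟩ := exists_unitary hα₀
  suffices h : (α₀ * b) ^ (n * m) ∈ B2 G by
    rw [mul_pow] at h
    exact ((B2 G).mul_mem_cancel_right ((B2 G).pow_mem hb _)).1 h
  generalize α₀ * b = α at hc hu
  have hcn : IsCocycle (α ^ n) := (Z2 G).pow_mem (show α ∈ Z2 G from hc) n
  have hres : (fun x y : N => α x y) ∈ Zu N := by
    refine ⟨fun x y z => by simpa using hc x y z, fun g => ?_⟩
    simpa using hu g
  obtain ⟨β, hβ, ζ, hζ⟩ := exists_inflation_s4 hcn N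
    (by
      intro x hx y hy
      obtain ⟨k, hk⟩ : Monoid.exponent ↥(Zu ↥N) ∣ n := Nat.dvd_lcm_left _ _
      have h0 := congrArg Subtype.val
        (Monoid.pow_exponent_eq_one (⟨_, hres⟩ : Zu N))
      have h1 := congrFun (congrFun h0 ⟨x, hx⟩) ⟨y, hy⟩
      have h2 : α x y ^ Monoid.exponent ↥(Zu ↥N) = 1 := by simpa using h1
      rw [Pi.pow_apply, Pi.pow_apply, hk, pow_mul, h2, one_pow])
    (by
      intro g x hx
      have hd : orderOf x ∣ n := by
        have := Monoid.order_dvd_exponent (⟨x, hx⟩ : N)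
        rw [Subgroup.orderOf_mk] at this
        exact this.trans (Nat.dvd_lcm_right _ _)
      obtain ⟨k, hk⟩ := hd
      have h := conj_scalar_pow_orderOf hc hu g x
      have h' : (α g x * (α (g * x * g⁻¹) g)⁻¹) ^ n = 1 := by rw [hk, pow_mul, h, one_pow]
      rw [mul_pow, inv_pow, mul_inv_eq_one] at h'
      exact h')
  have hβm : β ^ m ∈ B2 (G ⧸ N) := by
    have h := Monoid.pow_exponent_eq_one
      (QuotientGroup.mk (⟨β, hβ⟩ : Z2 (G ⧸ N)) : SchurM (G ⧸ N))
    rw [← QuotientGroup.mk_pow, QuotientGroup.eq_one_iff, Subgroup.mem_subgroupOf] at h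
    exact h
  obtain ⟨ξ, hξ⟩ := hβm
  have hB : (fun g h => ζ g * ζ h * (ζ (g * h))⁻¹ : G → G → ℂˣ) ∈ B2 G := ⟨ζ, fun _ _ => rfl⟩
  refine ((B2 G).mul_mem_cancel_right ((B2 G).pow_mem hB m)).1 ?_
  rw [pow_mul, ← mul_pow]
  refine ⟨fun g => ξ g, fun g h => ?_⟩
  have := hξ g h
  simp only [Pi.pow_apply, Pi.mul_apply] at this ⊢
  rw [← QuotientGroup.mk_mul] at this
  rw [← this, ← hζ g h]
  rfl
end

section
/- Let G be a finite group and N a normal subgroup of G. Then lcm(exp Zu(G), exp G) divides lcm(exp Zu(N), exp N) · lcm(exp Zu(G/N), exp(G/N)). -/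
/-- `F : G → Γ` is a homomorphism up to the scalars `Z (δ x y)`, which commute with its values. -/
structure IsTwistedHom {G Γ : Type*} [Group G] [Group Γ] (Z : ℂˣ →* Γ) (F : G → Γ)
    (δ : G → G → ℂˣ) : Prop where
  comm : ∀ c x, Commute (Z c) (F x)
  map_mul : ∀ x y, F x * F y = Z (δ x y) * F (x * y)

namespace IsTwistedHom

variable {G Γ : Type*} [Group G] [Group Γ] {Z : ℂˣ →* Γ} {F : G → Γ} {δ : G → G → ℂˣ}

lemma isCocycle (h : IsTwistedHom Z F δ) (hZ : Function.Injective Z) : IsCocycle δ := by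
  intro x y z
  apply hZ
  have h1 : F x * F y * F z = Z (δ x y * δ (x * y) z) * F (x * y * z) := by
    rw [h.map_mul, mul_assoc, h.map_mul, _root_.map_mul, mul_assoc (Z (δ x y))]
  have h2 : F x * (F y * F z) = Z (δ x (y * z) * δ y z) * F (x * y * z) := by
    rw [h.map_mul y z, ← mul_assoc, ← (h.comm _ _).eq, mul_assoc, h.map_mul, ← mul_assoc,
      ← _root_.map_mul, mul_comm (δ y z), mul_assoc x]
  rw [← mul_assoc, h1] at h2
  exact mul_right_cancel h2

/-- The products in the definition of unitarity are the scalars by which powers of `F x` differ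
from the values of `F` at powers of `x`. -/
lemma pow_eq (h : IsTwistedHom Z F δ) (h1 : F 1 = 1) (x : G) (k : ℕ) :
    F x ^ k = Z (∏ j ∈ Finset.range k, δ x (x ^ j)) * F (x ^ k) := by
  induction k with
  | zero => simp [h1]
  | succ k ih =>
    rw [_root_.pow_succ', ih, ← mul_assoc, ← (h.comm _ _).eq, mul_assoc, h.map_mul,
      Finset.prod_range_succ, _root_.map_mul, mul_assoc, _root_.pow_succ']

lemma pow_orderOf (h : IsTwistedHom Z F δ) (h1 : F 1 = 1) (hu : IsUnitary δ) (x : G) :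
    F x ^ orderOf x = 1 := by
  rw [h.pow_eq h1, hu x, pow_orderOf_eq_one, h1, map_one, mul_one]

end IsTwistedHom

/-- `ℂˣ` acting on `ℂˣ × G` by multiplication in the first factor. -/
def scalarPerm (G : Type*) : ℂˣ →* Equiv.Perm (ℂˣ × G) where
  toFun c := (Equiv.mulLeft c).prodCongr (Equiv.refl G)
  map_one' := by ext p <;> simp
  map_mul' a b := by ext p <;> simp [mul_assoc]

/-- The twisted left translation of `ℂˣ × G` by `x`. -/
def twistedPerm {G : Type*} [Group G] (α : G → G → ℂˣ) (x : G) : Equiv.Perm (ℂˣ × G) where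
  toFun p := (α x p.2 * p.1, x * p.2)
  invFun p := ((α x (x⁻¹ * p.2))⁻¹ * p.1, x⁻¹ * p.2)
  left_inv p := by simp
  right_inv p := by simp

lemma scalarPerm_injective (G : Type*) [Group G] : Function.Injective (scalarPerm G) := by
  intro a b hab
  have := congrArg (fun e : Equiv.Perm (ℂˣ × G) => (e (1, 1)).1) hab
  simpa [scalarPerm] using this

lemma isTwistedHom_twistedPerm {G : Type*} [Group G] {α : G → G → ℂˣ} (hα : IsCocycle α) :
    IsTwistedHom (scalarPerm G) (twistedPerm α) α where
  comm c x := by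
    refine Equiv.ext fun p => ?_
    simp [scalarPerm, twistedPerm, mul_left_comm]
  map_mul x y := by
    refine Equiv.ext fun p => ?_
    simp only [scalarPerm, twistedPerm, Equiv.Perm.mul_apply, Equiv.coe_fn_mk, MonoidHom.coe_mk,
      OneHom.coe_mk, Equiv.prodCongr_apply, Prod.map, Equiv.coe_mulLeft, Equiv.refl_apply,
      mul_assoc, Prod.mk.injEq, and_true]
    rw [← mul_assoc, ← mul_assoc, hα x y p.2]

lemma twistedPerm_one {G : Type*} [Group G] {α : G → G → ℂˣ} (hα : IsCocycle α)
    (hu : IsUnitary α) : twistedPerm α 1 = 1 := by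
  have h11 : α 1 1 = 1 := by simpa using hu 1
  have h := (isTwistedHom_twistedPerm hα).map_mul 1 1
  rw [h11, map_one, one_mul, mul_one] at h
  exact mul_eq_left.mp h

lemma Zu.pow_lcm_eq_one {G : Type*} [Group G] {α : G → G → ℂˣ} (hα : α ∈ Zu G) (x y : G) :
    α x y ^ Nat.lcm (Monoid.exponent ↥(Zu G)) (Monoid.exponent G) = 1 := by
  obtain ⟨m, hm⟩ := Nat.dvd_lcm_left (Monoid.exponent ↥(Zu G)) (Monoid.exponent G)
  have h := congrArg Subtype.val (Monoid.pow_exponent_eq_one (⟨α, hα⟩ : Zu G))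
  have h2 := congrFun (congrFun h x) y
  simp only [SubmonoidClass.coe_pow, Pi.pow_apply, OneMemClass.coe_one, Pi.one_apply] at h2
  rw [hm, pow_mul, h2, one_pow]

lemma Zu.restrict_mem {G : Type*} [Group G] {α : G → G → ℂˣ} (hα : α ∈ Zu G) (N : Subgroup G) :
    (fun n m : N => α n m) ∈ Zu N := by
  refine ⟨fun x y z => ?_, fun g => ?_⟩
  · simpa using hα.1 x y z
  · simpa using hα.2 g

/-- A power of a unitary cocycle that kills both `N` and the unitary cocycles on `N` is trivial on
`N`, has trivial commutators with `N`, and satisfies a unitarity condition modulo `N`. -/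
lemma Zu.pow_facts {G : Type*} [Group G] (N : Subgroup G) [N.Normal]
    {α : G → G → ℂˣ} (hα : α ∈ Zu G) {e : ℕ}
    (he : e = Nat.lcm (Monoid.exponent ↥(Zu N)) (Monoid.exponent N)) :
    (∀ n ∈ N, ∀ m ∈ N, α n m ^ e = 1) ∧
    (∀ g, ∀ n ∈ N, α g n ^ e = α (g * n * g⁻¹) g ^ e) ∧
    (∀ x : G, ∏ j ∈ Finset.range (orderOf (x : G ⧸ N)), α x (x ^ j) ^ e = 1) := by
  have hT := isTwistedHom_twistedPerm hα.1
  have h1 := twistedPerm_one hα.1 hα.2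
  have hinj := scalarPerm_injective G
  have hord : ∀ n ∈ N, orderOf n ∣ e := fun n hn => by
    rw [he, ← Subgroup.orderOf_mk n hn]
    exact (Monoid.order_dvd_exponent _).trans (Nat.dvd_lcm_right _ _)
  -- A scalar whose `orderOf n`-th power is trivial is killed by `e`.
  have key : ∀ n ∈ N, ∀ c : ℂˣ, scalarPerm G c ^ orderOf n = 1 → c ^ e = 1 := by
    intro n hn c hc
    rw [← map_pow, map_eq_one_iff _ hinj] at hc
    obtain ⟨m, hm⟩ := hord n hn
    rw [hm, pow_mul, hc, one_pow]
  refine ⟨fun n hn m hm => ?_, fun g n hn => ?_, fun x => ?_⟩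
  · rw [he]
    exact Zu.pow_lcm_eq_one (Zu.restrict_mem hα N) ⟨n, hn⟩ ⟨m, hm⟩
  · set R := twistedPerm α
    have hconj : R g * R n * (R g)⁻¹
        = scalarPerm G (α g n * (α (g * n * g⁻¹) g)⁻¹) * R (g * n * g⁻¹) := by
      rw [mul_inv_eq_iff_eq_mul, hT.map_mul, mul_assoc _ (R _) (R g), hT.map_mul, ← mul_assoc,
        ← map_mul]
      simp
    have hpow := congrArg (· ^ orderOf n) hconj
    have hn' : orderOf (g * n * g⁻¹) = orderOf n := by
      simpa using orderOf_injective (MulAut.conj g).toMonoidHom (MulAut.conj g).injective n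
    have hR := hT.pow_orderOf h1 hα.2 (g * n * g⁻¹)
    rw [hn'] at hR
    simp only [conj_pow, hT.pow_orderOf h1 hα.2 n, (hT.comm _ _).mul_pow] at hpow
    rw [hR] at hpow
    have := key n hn _ (by simpa only [mul_one, mul_inv_cancel] using hpow.symm)
    rwa [mul_pow, inv_pow, mul_inv_eq_one] at this
  · set k := orderOf (x : G ⧸ N)
    have hxk : x ^ k ∈ N := by
      rw [← QuotientGroup.eq_one_iff, QuotientGroup.mk_pow, pow_orderOf_eq_one]
    rw [Finset.prod_pow]
    apply key _ hxk
    have hp := congrArg (· ^ orderOf (x ^ k)) (hT.pow_eq h1 x k)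
    have hx1 : x ^ (k * orderOf (x ^ k)) = 1 := by rw [pow_mul, pow_orderOf_eq_one]
    obtain ⟨m, hm⟩ := orderOf_dvd_of_pow_eq_one hx1
    simp only [(hT.comm _ _).mul_pow, hT.pow_orderOf h1 hα.2, mul_one] at hp
    rw [← hp, ← pow_mul, hm, pow_mul, hT.pow_orderOf h1 hα.2, one_pow]

/-- A unitary cocycle that is trivial on `N`, has trivial commutators with `N`, and is unitary
modulo `N` has exponent dividing that of the unitary cover of `G ⧸ N`. -/
lemma pow_eq_one_of_facts {G : Type*} [Group G] (N : Subgroup G) [N.Normal]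
    {γ : G → G → ℂˣ} (hγ : γ ∈ Zu G)
    (hN : ∀ n ∈ N, ∀ m ∈ N, γ n m = 1)
    (hcomm : ∀ g, ∀ n ∈ N, γ g n = γ (g * n * g⁻¹) g)
    (hprod : ∀ x : G, ∏ j ∈ Finset.range (orderOf (x : G ⧸ N)), γ x (x ^ j) = 1) (x y : G) :
    γ x y ^ Nat.lcm (Monoid.exponent ↥(Zu (G ⧸ N))) (Monoid.exponent (G ⧸ N)) = 1 := by
  have hT := isTwistedHom_twistedPerm hγ.1
  have h1 := twistedPerm_one hγ.1 hγ.2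
  have hinj := scalarPerm_injective G
  set R := twistedPerm γ
  set Z := scalarPerm G
  have hRN : ∀ n ∈ N, ∀ m ∈ N, R n * R m = R (n * m) := fun n hn m hm => by
    rw [hT.map_mul, hN n hn m hm, map_one, one_mul]
  have hRc : ∀ g, ∀ n ∈ N, R g * R n = R (g * n * g⁻¹) * R g := fun g n hn => by
    rw [hT.map_mul, hT.map_mul, hcomm g n hn]; simp
  let σ : G → G := fun x => (x : G ⧸ N).out
  have hσ : ∀ x, (σ x)⁻¹ * x ∈ N := fun x => by
    rw [← QuotientGroup.eq]; exact QuotientGroup.out_eq' _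
  have hσN : ∀ x, ∀ n ∈ N, σ (x * n) = σ x := fun x n hn => by
    simp only [σ]; rw [QuotientGroup.mk_mul_of_mem x hn]
  let d : G → ℂˣ := fun x => γ (σ x) ((σ x)⁻¹ * x)
  let S : G → Equiv.Perm (ℂˣ × G) := fun x => R (σ x) * R ((σ x)⁻¹ * x)
  have hSR : ∀ x, S x = Z (d x) * R x := fun x => by
    simp only [S, d]; rw [hT.map_mul, mul_inv_cancel_left]
  have hSN : ∀ x, ∀ n ∈ N, S (x * n) = S x * R n := fun x n hn => by
    simp only [S]
    rw [hσN x n hn, mul_assoc, hRN _ (hσ x) n hn, mul_assoc]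
  have hS1 : S 1 = 1 := by
    have h := hσ 1
    have h' : σ 1 ∈ N := by simpa using h
    simp only [S]
    rw [hRN _ h' _ h]; simpa using h1
  have hSeq : ∀ n ∈ N, S n = R n := fun n hn => by
    have := hSN 1 n hn
    rwa [one_mul, hS1, one_mul] at this
  have hZZ : ∀ a b, Commute (Z a) (Z b) := fun a b => (Commute.all a b).map Z
  let δ : G → G → ℂˣ := fun x y => γ x y * d x * d y * (d (x * y))⁻¹
  have hS : IsTwistedHom Z S δ := by
    refine ⟨fun c x => ?_, fun x y => ?_⟩
    · rw [hSR]; exact (hZZ _ _).mul_right (hT.comm _ _)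
    · rw [hSR, hSR, hSR, mul_assoc, ← mul_assoc (R x), ← (hT.comm (d y) x).eq, mul_assoc,
        hT.map_mul, ← mul_assoc, ← mul_assoc, ← mul_assoc, ← map_mul, ← map_mul, ← map_mul]
      congr 2
      simp only [δ]
      rw [inv_mul_cancel_right, mul_assoc (γ x y), mul_comm (γ x y)]
  have hSc : ∀ y, ∀ n ∈ N, R n * S y = S y * R (y⁻¹ * n * y) := fun y n hn => by
    have hn' : y⁻¹ * n * y ∈ N := by
      simpa using (inferInstance : N.Normal).conj_mem n hn y⁻¹
    have h := hRc y _ hn'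
    rw [hSR, ← mul_assoc, ← (hT.comm _ _).eq, mul_assoc, mul_assoc, h]
    congr 3
    group
  have hδ : ∀ x y, ∀ n ∈ N, ∀ m ∈ N, δ (x * n) (y * m) = δ x y := by
    intro x y n hn m hm
    have hn' : y⁻¹ * n * y ∈ N := by
      simpa using (inferInstance : N.Normal).conj_mem n hn y⁻¹
    have e1 : S (x * n) * S (y * m) = Z (δ x y) * S (x * n * (y * m)) := by
      have : x * n * (y * m) = x * y * (y⁻¹ * n * y * m) := by group
      rw [this, hSN _ _ (N.mul_mem hn' hm), ← mul_assoc (Z _), ← hS.map_mul, ← hRN _ hn' _ hm,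
        hSN x n hn, hSN y m hm, mul_assoc (S x), ← mul_assoc (R n), hSc y n hn]
      simp only [mul_assoc]
    rw [hS.map_mul] at e1
    exact hinj (mul_right_cancel e1)
  let β : G ⧸ N → G ⧸ N → ℂˣ := fun p q => δ p.out q.out
  have hβ : ∀ x y : G, β x y = δ x y := fun x y => by
    have := hδ (σ x) (σ y) _ (hσ x) _ (hσ y)
    rw [mul_inv_cancel_left, mul_inv_cancel_left] at this
    exact this.symm
  have hRk : ∀ x : G, R x ^ orderOf (x : G ⧸ N) = R (x ^ orderOf (x : G ⧸ N)) := fun x => by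
    rw [hT.pow_eq h1, hprod, map_one, one_mul]
  have hmem : ∀ x : G, x ^ orderOf (x : G ⧸ N) ∈ N := fun x => by
    rw [← QuotientGroup.eq_one_iff, QuotientGroup.mk_pow, pow_orderOf_eq_one]
  have hSk : ∀ x : G, S x ^ orderOf (x : G ⧸ N) =
      Z (∏ j ∈ Finset.range (orderOf (x : G ⧸ N)), β x ((x : G ⧸ N) ^ j)) *
        R (x ^ orderOf (x : G ⧸ N)) := fun x => by
    rw [hS.pow_eq hS1, hSeq _ (hmem x)]
    congr 2
    refine Finset.prod_congr rfl fun j _ => ?_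
    rw [← QuotientGroup.mk_pow, hβ]
  have hβu : β ∈ Zu (G ⧸ N) := by
    refine ⟨fun p q r => ?_, fun p => ?_⟩
    · obtain ⟨x, rfl⟩ := QuotientGroup.mk_surjective p
      obtain ⟨y, rfl⟩ := QuotientGroup.mk_surjective q
      obtain ⟨z, rfl⟩ := QuotientGroup.mk_surjective r
      rw [← QuotientGroup.mk_mul, ← QuotientGroup.mk_mul, hβ, hβ, hβ, hβ]
      exact hS.isCocycle hinj x y z
    · -- On the chosen representative `p.out`, the maps `S` and `R` agree.
      have hp : ((p.out : G) : G ⧸ N) = p := QuotientGroup.out_eq' p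
      have h := hSk p.out
      have hSp : S p.out = R p.out := by
        simp only [S, σ]
        rw [hp, inv_mul_cancel, h1, mul_one]
      rw [hSp, hRk, right_eq_mul, map_eq_one_iff _ hinj, hp] at h
      exact h
  have hd : ∀ x, d x ^ orderOf (x : G ⧸ N) = 1 := fun x => by
    have h := hSk x
    rw [hβu.2 (x : G ⧸ N), map_one, one_mul, hSR, (hT.comm _ _).mul_pow, hRk, mul_eq_right,
      ← map_pow, map_eq_one_iff _ hinj] at h
    exact h
  set f := Nat.lcm (Monoid.exponent ↥(Zu (G ⧸ N))) (Monoid.exponent (G ⧸ N))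
  have hdf : ∀ x, d x ^ f = 1 := fun x => by
    obtain ⟨m, hm⟩ := (Monoid.order_dvd_exponent (x : G ⧸ N)).trans
      (Nat.dvd_lcm_right (Monoid.exponent ↥(Zu (G ⧸ N))) _)
    change d x ^ (Nat.lcm _ _) = 1
    rw [hm, pow_mul, hd, one_pow]
  have hfin : δ x y ^ f = 1 := by
    rw [← hβ]; exact Zu.pow_lcm_eq_one hβu _ _
  simpa [δ, mul_pow, hdf] using hfin

/-- For a finite group `G` and a normal subgroup `N`, the exponent of the
unitary cover `lcm(exp Zu(G), exp G)` divides
`lcm(exp Zu(N), exp N) · lcm(exp Zu(G/N), exp (G/N))`. -/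
theorem exponent_unitaryCover_dvd_mul_of_normal
    (G : Type*) [Group G] [Finite G] (N : Subgroup G) [N.Normal] :
    Nat.lcm (Monoid.exponent ↥(Zu G)) (Monoid.exponent G) ∣
      Nat.lcm (Monoid.exponent ↥(Zu ↥N)) (Monoid.exponent ↥N) *
        Nat.lcm (Monoid.exponent ↥(Zu (G ⧸ N))) (Monoid.exponent (G ⧸ N)) := by
  refine Nat.lcm_dvd ?_ ?_
  · refine Monoid.exponent_dvd_of_forall_pow_eq_one fun ⟨α, hα⟩ => Subtype.ext ?_
    obtain ⟨h1, h2, h3⟩ := Zu.pow_facts N hα rfl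
    funext x y
    have := pow_eq_one_of_facts N (γ := α ^ Nat.lcm (Monoid.exponent ↥(Zu N)) (Monoid.exponent N))
      ((Zu G).pow_mem hα _) h1 h2 h3 x y
    simpa [pow_mul] using this
  · refine Dvd.dvd.trans ?_ (mul_dvd_mul (Nat.dvd_lcm_right _ _) (Nat.dvd_lcm_right _ _))
    refine Monoid.exponent_dvd_of_forall_pow_eq_one fun g => ?_
    have hg : g ^ Monoid.exponent (G ⧸ N) ∈ N := by
      rw [← QuotientGroup.eq_one_iff, QuotientGroup.mk_pow, Monoid.pow_exponent_eq_one]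
    have h := congrArg Subtype.val (Monoid.pow_exponent_eq_one (⟨_, hg⟩ : N))
    rw [mul_comm, pow_mul]
    simpa using h
end

section
/- Let G be a finite group which is an internal semidirect product G = N ⋊ H, i.e. N is a normal subgroup, H is a subgroup, N ∩ H = 1 and NH = G. Then exp M(G) divides lcm(exp Zu(N), exp N, exp M(H)). -/
/-- The set `G × ℂˣ`, to be given the group law twisted by the cocycle `α`. -/
structure TwistedExt {G : Type*} (α : G → G → ℂˣ) where
  /-- The image in `G`. -/
  base : G
  /-- The scalar coordinate. -/
  scal : ℂˣ

section CentralExtension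

variable {G : Type*} [Group G] {α : G → G → ℂˣ}

lemma IsCocycle.one_left (hα : IsCocycle α) (x : G) : α 1 x = α 1 1 := by
  have h := hα 1 1 x
  simp only [one_mul] at h
  exact (mul_right_cancel h).symm

lemma IsCocycle.one_right (hα : IsCocycle α) (x : G) : α x 1 = α 1 1 := by
  have h := hα x 1 1
  simp only [mul_one] at h
  exact mul_left_cancel h

/-- The group law `(x, a) * (y, b) = (x * y, a * b * α x y)`. The cocycle need not be normalised,
so the identity is `(1, (α 1 1)⁻¹)`. -/
@[reducible] def twistedGroup (hα : IsCocycle α) : Group (TwistedExt α) :=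
  letI : Mul (TwistedExt α) := ⟨fun u v => ⟨u.base * v.base, u.scal * v.scal * α u.base v.base⟩⟩
  letI : One (TwistedExt α) := ⟨⟨1, (α 1 1)⁻¹⟩⟩
  letI : Inv (TwistedExt α) :=
    ⟨fun u => ⟨u.base⁻¹, u.scal⁻¹ * (α u.base⁻¹ u.base)⁻¹ * (α 1 1)⁻¹⟩⟩
  Group.ofLeftAxioms
    (by
      rintro ⟨x, a⟩ ⟨y, b⟩ ⟨z, c⟩
      change TwistedExt.mk _ _ = TwistedExt.mk _ _
      congr 1
      · exact mul_assoc x y z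
      · change a * b * α x y * c * α (x * y) z = a * (b * c * α y z) * α x (y * z)
        calc a * b * α x y * c * α (x * y) z = a * b * c * (α x y * α (x * y) z) := by
              simp only [mul_comm, mul_left_comm]
          _ = a * b * c * (α x (y * z) * α y z) := by rw [hα x y z]
          _ = _ := by simp only [mul_comm, mul_left_comm])
    (by
      rintro ⟨x, a⟩
      change TwistedExt.mk _ _ = TwistedExt.mk _ _
      congr 1
      · exact one_mul x
      · change (α 1 1)⁻¹ * a * α 1 x = a
        rw [hα.one_left x, mul_comm, mul_inv_cancel_left])
    (by
      rintro ⟨x, a⟩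
      change TwistedExt.mk _ _ = TwistedExt.mk _ _
      congr 1
      · exact inv_mul_cancel x
      · change a⁻¹ * (α x⁻¹ x)⁻¹ * (α 1 1)⁻¹ * a * α x⁻¹ x = (α 1 1)⁻¹
        calc a⁻¹ * (α x⁻¹ x)⁻¹ * (α 1 1)⁻¹ * a * α x⁻¹ x
            = (a⁻¹ * a) * ((α x⁻¹ x)⁻¹ * α x⁻¹ x) * (α 1 1)⁻¹ := by
              simp only [mul_comm, mul_left_comm, mul_assoc]
          _ = _ := by simp)

/-- Every 2-cocycle comes from a section of a central extension of `G` by `ℂˣ`. -/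
lemma exists_centralExtension.{u} {G : Type u} [Group G] {α : G → G → ℂˣ} (hα : IsCocycle α) :
    ∃ (E : Type u) (_ : Group E) (ι : ℂˣ →* E) (π : E →* G) (s : G → E),
      Function.Injective ι ∧ (∀ a v, ι a * v = v * ι a) ∧ (∀ a, π (ι a) = 1) ∧
      (∀ v, π v = 1 → ∃ a, v = ι a) ∧ (∀ x, π (s x) = x) ∧
      ∀ x y, s x * s y = ι (α x y) * s (x * y) := by
  let _ := twistedGroup hα
  refine ⟨TwistedExt α, twistedGroup hα,
    MonoidHom.mk' (fun a => ⟨1, a * (α 1 1)⁻¹⟩) ?_, MonoidHom.mk' (fun v => v.base) ?_,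
    fun x => ⟨x, 1⟩, ?_, ?_, ?_, ?_, ?_, ?_⟩
  · intro a b
    change TwistedExt.mk _ _ = TwistedExt.mk _ _
    congr 1
    · exact (one_mul 1).symm
    · change a * b * (α 1 1)⁻¹ = a * (α 1 1)⁻¹ * (b * (α 1 1)⁻¹) * α 1 1
      simp [mul_assoc, mul_comm b]
  · intro u v
    rfl
  · intro a b h
    exact mul_right_cancel (congrArg TwistedExt.scal h)
  · rintro a ⟨x, b⟩
    change TwistedExt.mk _ _ = TwistedExt.mk _ _
    congr 1
    · exact (one_mul x).trans (mul_one x).symm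
    · change a * (α 1 1)⁻¹ * b * α 1 x = b * (a * (α 1 1)⁻¹) * α x 1
      rw [hα.one_left x, hα.one_right x, mul_comm b]
  · intro a
    rfl
  · rintro ⟨x, a⟩ h
    obtain rfl : x = 1 := h
    refine ⟨a * α 1 1, ?_⟩
    change TwistedExt.mk _ _ = TwistedExt.mk _ _
    congr 1
    simp
  · intro x
    rfl
  · intro x y
    change TwistedExt.mk _ _ = TwistedExt.mk _ _
    congr 1
    · exact (one_mul _).symm
    · change 1 * 1 * α x y = α x y * (α 1 1)⁻¹ * 1 * α 1 (x * y)
      rw [hα.one_left (x * y)]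
      simp

end CentralExtension

section Sections

variable {K E : Type*} [Group K] [Group E] {ι : ℂˣ →* E} {s : K → E} {β : K → K → ℂˣ}

lemma isCocycle_of_section (hι : Function.Injective ι) (hc : ∀ a v, ι a * v = v * ι a)
    (hs : ∀ x y, s x * s y = ι (β x y) * s (x * y)) : IsCocycle β := by
  intro x y z
  apply hι
  apply mul_right_cancel (b := s (x * y * z))
  calc ι (β x y * β (x * y) z) * s (x * y * z) = s x * s y * s z := by
        rw [hs x y, mul_assoc _ (s (x * y)), hs, map_mul, mul_assoc]
    _ = s x * (s y * s z) := mul_assoc _ _ _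
    _ = _ := by
        rw [hs y z, ← mul_assoc, ← hc, mul_assoc, hs, map_mul, ← mul_assoc, ← map_mul,
          mul_comm (β y z), map_mul, mul_assoc x y z]

lemma isUnitary_of_section (hι : Function.Injective ι) (hc : ∀ a v, ι a * v = v * ι a)
    (hs : ∀ x y, s x * s y = ι (β x y) * s (x * y)) (ho : ∀ x, s x ^ orderOf x = 1) :
    IsUnitary β := by
  intro g
  have key : ∀ k : ℕ, s g ^ k * s 1 = ι (∏ j ∈ Finset.range k, β g (g ^ j)) * s (g ^ k) := by
    intro k
    induction k with
    | zero => simp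
    | succ k ih =>
      rw [pow_succ', mul_assoc, ih, ← mul_assoc, ← hc, mul_assoc, hs, Finset.prod_range_succ,
        map_mul, ← pow_succ', mul_assoc]
  have h := key (orderOf g)
  rw [ho, pow_orderOf_eq_one] at h
  apply hι
  rw [map_one]
  exact (mul_right_cancel h).symm

end Sections

lemma exists_units_pow_eq (a : ℂˣ) {n : ℕ} (hn : 0 < n) : ∃ b : ℂˣ, b ^ n = a := by
  obtain ⟨z, hz⟩ := IsAlgClosed.exists_pow_nat_eq (a : ℂ) hn
  have hz0 : z ≠ 0 := by
    rintro rfl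
    rw [zero_pow hn.ne'] at hz
    exact a.ne_zero hz.symm
  exact ⟨Units.mk0 z hz0, Units.ext (by simpa using hz)⟩

lemma pow_mem_B2_of_exponent_dvd {K : Type*} [Group K] {α : K → K → ℂˣ} (hα : IsCocycle α) {e : ℕ}
    (he : Monoid.exponent (SchurM K) ∣ e) : α ^ e ∈ B2 K := by
  have h := Monoid.exponent_dvd_iff_forall_pow_eq_one.1 he
    (QuotientGroup.mk (⟨α, hα⟩ : Z2 K) : SchurM K)
  rw [← QuotientGroup.mk_pow, QuotientGroup.eq_one_iff, Subgroup.mem_subgroupOf] at h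
  exact h

/-- If the finite group `G` is an internal semidirect product `G = N ⋊ H`,
then `exp M(G)` divides `lcm(exp Zu(N), exp N, exp M(H))`. -/
theorem exponent_schurMultiplier_dvd_lcm_of_semidirect
    (G : Type*) [Group G] [Finite G] (N H : Subgroup G) [N.Normal]
    (hdisj : N ⊓ H = ⊥) (hsup : N ⊔ H = ⊤) :
    Monoid.exponent (SchurM G) ∣
      Nat.lcm (Monoid.exponent ↥(Zu ↥N))
        (Nat.lcm (Monoid.exponent ↥N) (Monoid.exponent (SchurM ↥H))) := by
  set e := Nat.lcm (Monoid.exponent ↥(Zu ↥N))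
        (Nat.lcm (Monoid.exponent ↥N) (Monoid.exponent (SchurM ↥H)))
  have heZ : Monoid.exponent ↥(Zu ↥N) ∣ e := Nat.dvd_lcm_left _ _
  have heN : Monoid.exponent ↥N ∣ e := (Nat.dvd_lcm_left _ _).trans (Nat.dvd_lcm_right _ _)
  have heH : Monoid.exponent (SchurM ↥H) ∣ e :=
    (Nat.dvd_lcm_right _ _).trans (Nat.dvd_lcm_right _ _)
  clear_value e
  rw [Monoid.exponent_dvd_iff_forall_pow_eq_one]
  intro A
  induction A using QuotientGroup.induction_on with
  | H A =>
  obtain ⟨α, hα⟩ := A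
  rw [← QuotientGroup.mk_pow, QuotientGroup.eq_one_iff, Subgroup.mem_subgroupOf]
  change α ^ e ∈ B2 G
  obtain ⟨E, _, ι, π, s₀, hι, hc, hπι, hker, hπs₀, hs₀⟩ := exists_centralExtension hα
  -- Two elements of `E` over the same element of `G` differ by a scalar.
  have hdiff : ∀ u v : E, π u = π v → ∃ a, u = ι a * v := by
    intro u v h
    obtain ⟨a, ha⟩ := hker (u * v⁻¹) (by rw [map_mul, map_inv, h, mul_inv_cancel])
    exact ⟨a, by rw [← ha, inv_mul_cancel_right]⟩
  have hpow : ∀ (a : ℂˣ) (v : E) (k : ℕ), (ι a * v) ^ k = ι (a ^ k) * v ^ k := by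
    intro a v k
    rw [(show Commute (ι a) v from hc a v).mul_pow, map_pow]
  have hlift : ∀ n : N, ∃ v : E, π v = n ∧ v ^ orderOf n = 1 := by
    intro n
    obtain ⟨a, ha⟩ := hker (s₀ n ^ orderOf n) (by
      rw [map_pow, hπs₀, ← Subgroup.coe_pow, pow_orderOf_eq_one, Subgroup.coe_one])
    obtain ⟨b, hb⟩ := exists_units_pow_eq a⁻¹ (orderOf_pos n)
    refine ⟨ι b * s₀ n, by rw [map_mul, hπι, hπs₀, one_mul], ?_⟩
    rw [hpow, hb, ha, ← map_mul, inv_mul_cancel, map_one]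
  choose s hπs hso using hlift
  have hse : ∀ n, s n ^ e = 1 := fun n =>
    orderOf_dvd_iff_pow_eq_one.1 <| (orderOf_dvd_of_pow_eq_one (hso n)).trans <|
      (Monoid.order_dvd_exponent n).trans heN
  have hαN : ∀ m n : N, ∃ a, s m * s n = ι a * s (m * n) := fun m n =>
    hdiff _ _ (by rw [map_mul, hπs, hπs, hπs, Subgroup.coe_mul])
  choose αN hαN using hαN
  have hαNe : ∀ m n, αN m n ^ e = 1 := by
    have hmem : αN ∈ Zu N :=
      ⟨isCocycle_of_section hι hc hαN, isUnitary_of_section hι hc hαN hso⟩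
    have h := Monoid.exponent_dvd_iff_forall_pow_eq_one.1 heZ ⟨αN, hmem⟩
    intro m n
    exact congrFun (congrFun (congrArg Subtype.val h) m) n
  let cj : H → N → N := fun h n => ⟨h * n * (h : G)⁻¹, Subgroup.Normal.conj_mem ‹_› _ n.2 _⟩
  have hcomm : ∀ (h : H) (n : N), ∃ a, s₀ h * s n * (s₀ h)⁻¹ = ι a * s (cj h n) := fun h n =>
    hdiff _ _ (by rw [map_mul, map_mul, map_inv, hπs₀, hπs, hπs])
  choose c hcomm using hcomm
  have hce : ∀ h n, c h n ^ e = 1 := by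
    intro h n
    have h1 := congrArg (· ^ e) (hcomm h n)
    simp only [hpow, conj_pow, hse, mul_one, mul_inv_cancel] at h1
    exact hι (by rw [← h1, map_one])
  obtain ⟨η, hη⟩ : (fun h h' : H => α h h') ^ e ∈ B2 H :=
    pow_mem_B2_of_exponent_dvd (α := fun h h' : H => α h h') (fun x y z => hα x y z) heH
  have hdec : ∀ x : G, ∃ (n : N) (h : H), x = n * h := by
    intro x
    obtain ⟨n, hn, h, hh, rfl⟩ := Subgroup.mem_sup_of_normal_left.1
      (show x ∈ N ⊔ H by rw [hsup]; trivial)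
    exact ⟨⟨n, hn⟩, ⟨h, hh⟩, rfl⟩
  choose p q hpq using hdec
  have huniq : ∀ (n n' : N) (h h' : H), (n : G) * h = n' * h' → n = n' ∧ h = h' := by
    intro n n' h h' heq
    have := Subgroup.mul_injective_of_disjoint (disjoint_iff.2 hdisj)
      (show (fun g : N × H => (g.1 * g.2 : G)) (n, h) = (fun g : N × H => (g.1 * g.2 : G)) (n', h')
        from heq)
    exact Prod.mk.inj this
  have hpqmul : ∀ x y, p (x * y) = p x * cj (q x) (p y) ∧ q (x * y) = q x * q y := by
    intro x y
    apply huniq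
    rw [← hpq]
    nth_rewrite 1 [hpq x, hpq y]
    simp only [Subgroup.coe_mul, cj]
    group
  have hζ : ∀ x, ∃ a, s (p x) * s₀ (q x) = ι a * s₀ x := fun x =>
    hdiff _ _ (by rw [map_mul, hπs, hπs₀, hπs₀, ← hpq])
  choose ζ hζ using hζ
  -- The cocycle of the section `x ↦ s (p x) * s₀ (q x)`, compared with `α`.
  have hmain : ∀ x y, ζ x * ζ y * α x y =
      αN (p x) (cj (q x) (p y)) * c (q x) (p y) * α (q x) (q y) * ζ (x * y) := by
    intro x y
    apply hι
    apply mul_right_cancel (b := s₀ (x * y))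
    have hl : ι (ζ x * ζ y * α x y) * s₀ (x * y)
        = s (p x) * s₀ (q x) * (s (p y) * s₀ (q y)) := by
      rw [hζ, hζ, map_mul, mul_assoc, ← hs₀, map_mul, mul_assoc (ι (ζ x)), ← mul_assoc (ι (ζ y)),
        hc (ζ y)]
      simp only [mul_assoc]
    have hcomm' : s₀ (q x) * s (p y) = ι (c (q x) (p y)) * s (cj (q x) (p y)) * s₀ (q x) := by
      rw [← hcomm, inv_mul_cancel_right]
    rw [hl]
    calc s (p x) * s₀ (q x) * (s (p y) * s₀ (q y))
        = s (p x) * (s₀ (q x) * s (p y)) * s₀ (q y) := by simp only [mul_assoc]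
      _ = (s (p x) * ι (c (q x) (p y))) * s (cj (q x) (p y)) * (s₀ (q x) * s₀ (q y)) := by
          rw [hcomm']
          simp only [mul_assoc]
      _ = ι (c (q x) (p y)) * (s (p x) * s (cj (q x) (p y))) * (s₀ (q x) * s₀ (q y)) := by
          rw [← hc]
          simp only [mul_assoc]
      _ = ι (c (q x) (p y)) * ι (αN (p x) (cj (q x) (p y))) *
          ((s (p (x * y)) * ι (α (q x) (q y))) * s₀ (q (x * y))) := by
          rw [hαN, hs₀, (hpqmul x y).1, (hpqmul x y).2, Subgroup.coe_mul]
          simp only [mul_assoc]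
      _ = _ := by
          rw [← hc (α _ _), mul_assoc (ι (α _ _)), hζ, mul_comm (αN _ _)]
          simp only [map_mul, mul_assoc]
  refine ⟨fun x => η (q x) * (ζ x ^ e)⁻¹, fun x y => ?_⟩
  have h1 := congrArg (· ^ e) (hmain x y)
  simp only [mul_pow, hαNe, hce, one_mul] at h1
  have h2 : α (q x) (q y) ^ e = η (q x) * η (q y) * (η (q (x * y)))⁻¹ := by
    rw [(hpqmul x y).2]
    exact hη (q x) (q y)
  rw [h2] at h1
  change α x y ^ e = _
  rw [← eq_inv_mul_iff_mul_eq] at h1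
  rw [h1]
  simp only [mul_inv, inv_inv, mul_comm, mul_left_comm, mul_assoc]
end

section
/- Let G be a finite group which is an internal semidirect product G = N ⋊ H, i.e. N is a normal subgroup, H is a subgroup, N ∩ H = 1 and NH = G. Then lcm(exp Zu(G), exp G) divides lcm( lcm(exp Zu(N), exp N) · exp H , lcm(exp Zu(H), exp H) ). -/
/-- The central extension of `G` by `ℂˣ` attached to a normalized cocycle `α`: pairs `(a, x)` with
product `(a, x) (b, y) = (a b α(x, y), x y)`. The cocycle conditions are parameters of the type so
that the group structure can be an instance. -/
@[ext]
structure TwistedExt_s7 {G : Type*} [Group G] (α : G → G → ℂˣ) (hα : IsCocycle α)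
    (h1 : α 1 1 = 1) where
  scalar : ℂˣ
  elt : G

namespace TwistedExt_s7

variable {G : Type*} [Group G] {α : G → G → ℂˣ} {hα : IsCocycle α} {h1 : α 1 1 = 1}

theorem one_left (hα : IsCocycle α) (h1 : α 1 1 = 1) (x : G) : α 1 x = 1 := by
  have h := hα 1 1 x
  simp only [one_mul, h1] at h
  exact (left_eq_mul.mp h)

theorem one_right (hα : IsCocycle α) (h1 : α 1 1 = 1) (x : G) : α x 1 = 1 := by
  have h := hα x 1 1
  simp only [mul_one, h1] at h
  exact (mul_eq_left.mp h)

instance : Mul (TwistedExt_s7 α hα h1) :=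
  ⟨fun p q => ⟨p.scalar * q.scalar * α p.elt q.elt, p.elt * q.elt⟩⟩

instance : One (TwistedExt_s7 α hα h1) := ⟨⟨1, 1⟩⟩

instance : Inv (TwistedExt_s7 α hα h1) :=
  ⟨fun p => ⟨p.scalar⁻¹ * (α p.elt⁻¹ p.elt)⁻¹, p.elt⁻¹⟩⟩

theorem mul_def (p q : TwistedExt_s7 α hα h1) :
    p * q = ⟨p.scalar * q.scalar * α p.elt q.elt, p.elt * q.elt⟩ := rfl

theorem one_def : (1 : TwistedExt_s7 α hα h1) = ⟨1, 1⟩ := rfl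

theorem inv_def (p : TwistedExt_s7 α hα h1) :
    p⁻¹ = ⟨p.scalar⁻¹ * (α p.elt⁻¹ p.elt)⁻¹, p.elt⁻¹⟩ := rfl

instance : Group (TwistedExt_s7 α hα h1) :=
  Group.ofLeftAxioms
    (by
      intro p q r
      simp only [mul_def]
      ext1
      · have h := hα p.elt q.elt r.elt
        calc p.scalar * q.scalar * α p.elt q.elt * r.scalar * α (p.elt * q.elt) r.elt
            = p.scalar * q.scalar * r.scalar * (α p.elt q.elt * α (p.elt * q.elt) r.elt) := by
              simp only [mul_comm, mul_left_comm]
          _ = _ := by rw [h]; simp only [mul_comm, mul_left_comm]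
      · exact mul_assoc _ _ _)
    (by
      intro p
      simp only [mul_def, one_def, one_mul, one_left hα h1, mul_one])
    (by
      intro p
      simp only [mul_def, one_def, inv_def]
      ext1
      · simp only
        rw [mul_right_comm p.scalar⁻¹, inv_mul_cancel, one_mul, inv_mul_cancel]
      · exact inv_mul_cancel _)

/-- The central embedding of the scalars. -/
def c (hα : IsCocycle α) (h1 : α 1 1 = 1) : ℂˣ →* TwistedExt_s7 α hα h1 where
  toFun a := ⟨a, 1⟩
  map_one' := rfl
  map_mul' a b := by simp [mul_def, h1]

/-- The section of the projection to `G` whose cocycle is `α`. -/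
def u (hα : IsCocycle α) (h1 : α 1 1 = 1) (x : G) : TwistedExt_s7 α hα h1 := ⟨1, x⟩

theorem c_injective : Function.Injective (c hα h1) := fun _ _ h => congrArg scalar h

theorem c_comm (a : ℂˣ) (p : TwistedExt_s7 α hα h1) : Commute (c hα h1 a) p := by
  simp [Commute, SemiconjBy, c, mul_def, one_left hα h1, one_right hα h1, mul_comm]

theorem u_mul (x y : G) : u hα h1 x * u hα h1 y = c hα h1 (α x y) * u hα h1 (x * y) := by
  simp [u, c, mul_def, one_left hα h1]

theorem u_one : u hα h1 1 = 1 := rfl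

theorem u_pow (g : G) (n : ℕ) :
    u hα h1 g ^ n = c hα h1 (∏ j ∈ Finset.range n, α g (g ^ j)) * u hα h1 (g ^ n) := by
  induction n with
  | zero => simp [u_one]
  | succ n ih =>
    rw [pow_succ', ih, ← mul_assoc, ← (c_comm _ (u hα h1 g)).eq, mul_assoc, u_mul, ← mul_assoc,
      ← map_mul, ← Finset.prod_range_succ, ← pow_succ']

theorem u_pow_eq_one (hu : IsUnitary α) {g : G} {n : ℕ} (hn : g ^ n = 1) :
    u hα h1 g ^ n = 1 := by
  obtain ⟨k, rfl⟩ := orderOf_dvd_of_pow_eq_one hn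
  rw [pow_mul, u_pow, hu g, pow_orderOf_eq_one, u_one, map_one, one_mul, one_pow]

/-- A scalar relating two elements killed by the `k`-th power is a `k`-th root of unity. -/
theorem scalar_pow_eq_one {p q : TwistedExt_s7 α hα h1} {a : ℂˣ} {k : ℕ} (h : p = c hα h1 a * q)
    (hp : p ^ k = 1) (hq : q ^ k = 1) : a ^ k = 1 := by
  apply c_injective (hα := hα) (h1 := h1)
  rw [h, (c_comm a q).mul_pow, hq, mul_one] at hp
  rw [map_pow, hp, map_one]

end TwistedExt_s7

/-- The restriction of a unitary cocycle to a subgroup is unitary, hence is killed by `exp Zu`. -/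
theorem unitary_restrict_pow {G : Type*} [Group G] {α : G → G → ℂˣ} (hα : IsCocycle α)
    (hu : IsUnitary α) (K : Subgroup G) {x y : G} (hx : x ∈ K) (hy : y ∈ K) :
    α x y ^ Monoid.exponent ↥(Zu ↥K) = 1 := by
  let β : K → K → ℂˣ := fun a b => α a b
  have hβ : β ∈ Zu K := by
    refine ⟨fun a b d => hα a b d, fun g => ?_⟩
    have h := hu g
    rw [Subgroup.orderOf_coe] at h
    simpa [β] using h
  have h := Monoid.pow_exponent_eq_one (⟨β, hβ⟩ : Zu K)
  have h2 := congrArg Subtype.val h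
  exact congrFun (congrFun h2 ⟨x, hx⟩) ⟨y, hy⟩

theorem subgroup_pow_exponent {G : Type*} [Group G] (K : Subgroup G) {x : G} (hx : x ∈ K) :
    x ^ Monoid.exponent K = 1 :=
  congrArg Subtype.val (Monoid.pow_exponent_eq_one (⟨x, hx⟩ : K))

theorem pow_eq_one_of_dvd {M : Type*} [Monoid M] {a : M} {m n : ℕ} (h : a ^ m = 1) (hd : m ∣ n) :
    a ^ n = 1 := by
  obtain ⟨k, rfl⟩ := hd
  rw [pow_mul, h, one_pow]

open TwistedExt_s7 in
/-- The submonoid `N* = {ζ • u n | ζ ^ e = 1, n ∈ N}` of the extension. -/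
def liftN {G : Type*} [Group G] {α : G → G → ℂˣ} (hα : IsCocycle α) (h1 : α 1 1 = 1)
    (N : Subgroup G) (e : ℕ) (hN : ∀ x ∈ N, ∀ y ∈ N, α x y ^ e = 1) :
    Submonoid (TwistedExt_s7 α hα h1) where
  carrier := {p | ∃ ζ : ℂˣ, ∃ n ∈ N, ζ ^ e = 1 ∧ p = c hα h1 ζ * u hα h1 n}
  one_mem' := ⟨1, 1, N.one_mem, one_pow _, by rw [map_one, u_one, one_mul]⟩
  mul_mem' := by
    rintro _ _ ⟨ζ, n, hn, hζ, rfl⟩ ⟨ξ, m, hm, hξ, rfl⟩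
    refine ⟨ζ * ξ * α n m, n * m, N.mul_mem hn hm, ?_, ?_⟩
    · rw [mul_pow, mul_pow, hζ, hξ, hN n hn m hm, one_mul, one_mul]
    · rw [(c_comm ξ (u hα h1 n)).symm.mul_mul_mul_comm, u_mul, map_mul, map_mul, mul_assoc,
        mul_assoc, mul_assoc]

section Semidirect

open TwistedExt_s7

variable {G : Type*} [Group G] {α : G → G → ℂˣ} {hα : IsCocycle α} {h1 : α 1 1 = 1}

/-- Conjugation by `u h` carries `u n` to `u (h * n * h⁻¹)` up to a scalar killed by `exp N`. -/
theorem exists_conj_scalar (hu : IsUnitary α) (N : Subgroup G) [hNn : N.Normal] (h : G) {n : G}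
    (hn : n ∈ N) : ∃ ζ : ℂˣ, ζ ^ Monoid.exponent N = 1 ∧
      u hα h1 h * u hα h1 n * (u hα h1 h)⁻¹ = c hα h1 ζ * u hα h1 (h * n * h⁻¹) := by
  have key : u hα h1 h * u hα h1 n * (u hα h1 h)⁻¹ =
      c hα h1 (α h n * (α (h * n * h⁻¹) h)⁻¹) * u hα h1 (h * n * h⁻¹) := by
    rw [mul_inv_eq_iff_eq_mul, mul_assoc, u_mul, u_mul, ← mul_assoc, ← map_mul,
      inv_mul_cancel_right, inv_mul_cancel_right]
  refine ⟨_, scalar_pow_eq_one key ?_ ?_, key⟩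
  · rw [conj_pow, u_pow_eq_one hu (subgroup_pow_exponent N hn), mul_one, mul_inv_cancel]
  · exact u_pow_eq_one hu (subgroup_pow_exponent N (hNn.conj_mem n hn h))

theorem conj_mem_liftN (hu : IsUnitary α) (N : Subgroup G) [hNn : N.Normal] {e : ℕ}
    (hN : ∀ x ∈ N, ∀ y ∈ N, α x y ^ e = 1) (he : Monoid.exponent N ∣ e) (h : G)
    {p : TwistedExt_s7 α hα h1} (hp : p ∈ liftN hα h1 N e hN) :
    u hα h1 h * p * (u hα h1 h)⁻¹ ∈ liftN hα h1 N e hN := by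
  obtain ⟨ζ, n, hn, hζ, rfl⟩ := hp
  obtain ⟨ξ, hξ, hc⟩ := exists_conj_scalar (hα := hα) (h1 := h1) hu N h hn
  refine ⟨ζ * ξ, h * n * h⁻¹, hNn.conj_mem n hn h, ?_, ?_⟩
  · rw [mul_pow, hζ, pow_eq_one_of_dvd hξ he, one_mul]
  · rw [map_mul, mul_assoc (c hα h1 ζ), ← hc, ← mul_assoc, ← (c_comm ζ (u hα h1 h)).eq]
    simp only [mul_assoc]

theorem liftN_pow (hu : IsUnitary α) (N : Subgroup G) {e : ℕ}
    (hN : ∀ x ∈ N, ∀ y ∈ N, α x y ^ e = 1) (he : Monoid.exponent N ∣ e)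
    {p : TwistedExt_s7 α hα h1} (hp : p ∈ liftN hα h1 N e hN) : p ^ e = 1 := by
  obtain ⟨ζ, n, hn, hζ, rfl⟩ := hp
  rw [(c_comm ζ _).mul_pow, ← map_pow, hζ, map_one, one_mul]
  exact u_pow_eq_one hu (pow_eq_one_of_dvd (subgroup_pow_exponent N hn) he)

/-- Since `u h` normalizes `N*`, the factors `u h` of `(u n * u h) ^ k` can be moved to the right. -/
theorem exists_mul_pow (hu : IsUnitary α) (N : Subgroup G) [N.Normal] {e : ℕ}
    (hN : ∀ x ∈ N, ∀ y ∈ N, α x y ^ e = 1) (he : Monoid.exponent N ∣ e) (h : G) {n : G}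
    (hn : n ∈ N) (k : ℕ) : ∃ p ∈ liftN hα h1 N e hN,
      (u hα h1 n * u hα h1 h) ^ k = p * u hα h1 h ^ k := by
  induction k with
  | zero => exact ⟨1, one_mem _, by simp⟩
  | succ k ih =>
    obtain ⟨p, hp, hpk⟩ := ih
    refine ⟨u hα h1 n * (u hα h1 h * p * (u hα h1 h)⁻¹), mul_mem ⟨1, n, hn, one_pow _, ?_⟩
      (conj_mem_liftN hu N hN he h hp), ?_⟩
    · rw [map_one, one_mul]
    · rw [pow_succ', hpk, pow_succ']
      group

theorem pow_exponent_mul (N H : Subgroup G) [N.Normal] {n h : G} (hn : n ∈ N) (hh : h ∈ H) :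
    (n * h) ^ (Monoid.exponent N * Monoid.exponent H) = 1 := by
  have hm : (n * h) ^ Monoid.exponent H ∈ N := by
    rw [← QuotientGroup.eq_one_iff, QuotientGroup.mk_pow, QuotientGroup.mk_mul,
      (QuotientGroup.eq_one_iff n).mpr hn, one_mul, ← QuotientGroup.mk_pow,
      subgroup_pow_exponent H hh, QuotientGroup.mk_one]
  rw [mul_comm, pow_mul]
  exact subgroup_pow_exponent N hm

/-- Both `u n * u h` and `u (n * h)` are killed by `e * exp H`, hence so is the scalar `α n h`. -/
theorem mixed_scalar_pow (hα : IsCocycle α) (h1 : α 1 1 = 1) (hu : IsUnitary α)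
    (N H : Subgroup G) [N.Normal] {e : ℕ}
    (hN : ∀ x ∈ N, ∀ y ∈ N, α x y ^ e = 1) (he : Monoid.exponent N ∣ e) {n h : G}
    (hn : n ∈ N) (hh : h ∈ H) : α n h ^ (e * Monoid.exponent H) = 1 := by
  refine scalar_pow_eq_one (u_mul (hα := hα) (h1 := h1) n h) ?_ ?_
  · obtain ⟨p, hp, hpk⟩ := exists_mul_pow (hα := hα) (h1 := h1) hu N hN he h hn (Monoid.exponent H)
    rw [mul_comm, pow_mul, hpk, u_pow_eq_one hu (subgroup_pow_exponent H hh), mul_one,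
      liftN_pow hu N hN he hp]
  · exact u_pow_eq_one hu (pow_eq_one_of_dvd (pow_exponent_mul N H hn hh)
      (Nat.mul_dvd_mul_right he _))

/-- Expanding `u n * u h * u n' * u h'` in two ways expresses `α (n h) (n' h')` through scalars that
are already known to be `E`-th roots of unity. -/
theorem value_pow (hα : IsCocycle α) (h1 : α 1 1 = 1) (hu : IsUnitary α)
    (N H : Subgroup G) [hNn : N.Normal] {e E : ℕ}
    (hN : ∀ x ∈ N, ∀ y ∈ N, α x y ^ e = 1) (he : Monoid.exponent N ∣ e)
    (heE : e * Monoid.exponent H ∣ E) (hH : ∀ x ∈ H, ∀ y ∈ H, α x y ^ E = 1)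
    {n h n' h' : G} (hn : n ∈ N) (hh : h ∈ H) (hn' : n' ∈ N) (hh' : h' ∈ H) :
    α (n * h) (n' * h') ^ E = 1 := by
  obtain ⟨ζ, hζ, hc⟩ := exists_conj_scalar (hα := hα) (h1 := h1) hu N h hn'
  have hm : h * n' * h⁻¹ ∈ N := hNn.conj_mem n' hn' h
  set m := h * n' * h⁻¹ with hmdef
  have hc' : u hα h1 h * u hα h1 n' = c hα h1 ζ * u hα h1 m * u hα h1 h :=
    mul_inv_eq_iff_eq_mul.mp hc
  have hg : n * h * (n' * h') = n * m * (h * h') := by rw [hmdef]; group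
  have hdE : e ∣ E := (Dvd.intro _ rfl).trans heE
  have e1 : u hα h1 n * u hα h1 h * (u hα h1 n' * u hα h1 h') =
      c hα h1 (α n h * α n' h' * α (n * h) (n' * h')) * u hα h1 (n * h * (n' * h')) := by
    rw [u_mul n h, u_mul n' h', (c_comm (α n' h') (u hα h1 (n * h))).symm.mul_mul_mul_comm, u_mul,
      ← map_mul, ← mul_assoc, ← map_mul]
  have e2 : u hα h1 n * u hα h1 h * (u hα h1 n' * u hα h1 h') =
      c hα h1 (ζ * (α n m * α h h' * α (n * m) (h * h'))) *
        u hα h1 (n * h * (n' * h')) := by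
    calc u hα h1 n * u hα h1 h * (u hα h1 n' * u hα h1 h')
        = u hα h1 n * (u hα h1 h * u hα h1 n') * u hα h1 h' := by simp only [mul_assoc]
      _ = u hα h1 n * c hα h1 ζ * u hα h1 m * u hα h1 h * u hα h1 h' := by
          rw [hc']; simp only [mul_assoc]
      _ = c hα h1 ζ * ((u hα h1 n * u hα h1 m) * (u hα h1 h * u hα h1 h')) := by
          rw [← (c_comm ζ (u hα h1 n)).eq]; simp only [mul_assoc]
      _ = _ := by
          rw [u_mul n m, u_mul h h', (c_comm (α h h') (u hα h1 (n * m))).symm.mul_mul_mul_comm,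
            u_mul, ← map_mul, hg]
          simp only [map_mul, mul_assoc]
  have e3 := c_injective (mul_right_cancel (e1.symm.trans e2))
  have mixed : ∀ a ∈ N, ∀ b ∈ H, α a b ^ E = 1 := fun a ha b hb =>
    pow_eq_one_of_dvd (mixed_scalar_pow hα h1 hu N H hN he ha hb) heE
  have e4 := congrArg (· ^ E) e3
  simpa [mul_pow, mixed n hn h hh, mixed n' hn' h' hh', pow_eq_one_of_dvd hζ (he.trans hdE),
    pow_eq_one_of_dvd (hN n hn m hm) hdE, hH h hh h' hh',
    mixed (n * m) (N.mul_mem hn hm) (h * h') (H.mul_mem hh hh')] using e4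

end Semidirect

/-- If the finite group `G` is an internal semidirect product `G = N ⋊ H`,
then `lcm(exp Zu(G), exp G)` divides
`lcm( lcm(exp Zu(N), exp N) · exp H , lcm(exp Zu(H), exp H) )`. -/
theorem exponent_unitaryCover_dvd_of_semidirect
    (G : Type*) [Group G] [Finite G] (N H : Subgroup G) [N.Normal]
    (hdisj : N ⊓ H = ⊥) (hsup : N ⊔ H = ⊤) :
    Nat.lcm (Monoid.exponent ↥(Zu G)) (Monoid.exponent G) ∣
      Nat.lcm
        (Nat.lcm (Monoid.exponent ↥(Zu ↥N)) (Monoid.exponent ↥N) * Monoid.exponent ↥H)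
        (Nat.lcm (Monoid.exponent ↥(Zu ↥H)) (Monoid.exponent ↥H)) := by
  have hdec : ∀ g : G, ∃ n ∈ N, ∃ h ∈ H, n * h = g := fun g =>
    Subgroup.mem_sup_of_normal_left.mp (hsup ▸ Subgroup.mem_top g)
  apply Nat.lcm_dvd
  · apply Monoid.exponent_dvd_of_forall_pow_eq_one
    rintro ⟨α, hα, hu⟩
    have h1 : α 1 1 = 1 := by simpa using hu 1
    apply Subtype.ext
    funext x y
    obtain ⟨n, hn, h, hh, rfl⟩ := hdec x
    obtain ⟨n', hn', h', hh', rfl⟩ := hdec y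
    exact value_pow hα h1 hu N H
      (fun a ha b hb => pow_eq_one_of_dvd (unitary_restrict_pow hα hu N ha hb)
        (Nat.dvd_lcm_left _ _))
      (Nat.dvd_lcm_right _ _) (Nat.dvd_lcm_left _ _)
      (fun a ha b hb => pow_eq_one_of_dvd (unitary_restrict_pow hα hu H ha hb)
        ((Nat.dvd_lcm_left _ _).trans (Nat.dvd_lcm_right _ _)))
      hn hh hn' hh'
  · apply Monoid.exponent_dvd_of_forall_pow_eq_one
    intro g
    obtain ⟨n, hn, h, hh, rfl⟩ := hdec g
    exact pow_eq_one_of_dvd (pow_exponent_mul N H hn hh)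
      ((Nat.mul_dvd_mul_right (Nat.dvd_lcm_right _ _) _).trans (Nat.dvd_lcm_left _ _))
end
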